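/- arXiv:1302.4219 — 2 statements merged into one kernel-verified Lean document; each statement's English description precedes it below -/
import Mathlib

section
/- For every non-star tree T and every vertex x of T that is not a bad vertex (not the center of an induced P5 configuration, i.e., not the middle vertex of a path P5 when T ≅ P5), there exists a (T,x)-good 2-placement: a fixed-point-free permutation σ of V(T) such that σ is a 2-placement of T, dist(σ(u),σ(v)) ≤ 5 for every edge uv of T, dist(x,σ(x)) = 1, dist(y,σ(y)) ≤ 2 for every neighbor y of x, and dist(y,σ(y)) ≤ 4 for every leaf y. -/
open SimpleGraph

/-- A non-star tree: a tree in which no vertex is adjacent to all other vertices. -/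
def IsNonStarTree {V : Type*} (G : SimpleGraph V) : Prop :=
  G.IsTree ∧ ¬ ∃ v, ∀ w, w ≠ v → G.Adj v w

/-!
Root the tree at `x` and induct on the number of vertices. Suppose that the subtrees below a vertex
`u` include some whose vertices have a 2-placement of their own that moves the neighbours of `u` by
at most 2 and keeps them within distance 3 of `u`. It can be combined with any good 2-placement `f`
of the rest with `dist u (f u) ≤ 2`: an edge from `u` to a removed vertex goes to a pair at distance
at most `2 + 3`, and this pair is not an edge, since `f u ≠ u` and all edges between the two parts
are at `u`. A subtree that is not a star can be removed in this way by induction, and so can two of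
three leaves with the same parent; once no such leaves are left, so can any two stars.

This leaves finitely many shapes, which are settled by a search run in the kernel, and one infinite
family: a subtree `C` below a child of `x` is not a star, but removing it leaves a star or a bad
vertex. Let `z` be the root of `C` and `z'` its image under a 2-placement of `C`. Forgetting
`z ↦ z'`, what is missing is a placement of the rest of the tree together with `z` and `z'` in which
`z'` has no image and `z` no preimage, and for this `C` may be replaced by the edge `z z'`.
-/

section Placements

variable {V : Type*} {G H W : SimpleGraph V} {S S' T T' A B C : Set V} {f g : V → V}
  {u x y z z' : V}

/-- A partial 2-placement: `f` embeds the subgraph of `G` induced on `S` into the complement of `G`,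
with image inside `S'`, without fixed points, moving vertices by at most 4 and the ends of an edge
to distance at most 5. -/
structure IsPlacementOn (G : SimpleGraph V) (S S' : Set V) (f : V → V) : Prop where
  mapsTo : S.MapsTo f S'
  injOn : S.InjOn f
  ne : ∀ v ∈ S, f v ≠ v
  edist_le : ∀ v ∈ S, G.edist v (f v) ≤ 4
  edge : ∀ u ∈ S, ∀ v ∈ S, G.Adj u v → ¬ G.Adj (f u) (f v) ∧ G.edist (f u) (f v) ≤ 5

/-- A partial 2-placement which is good at `x`: it moves `x` to a neighbour and moves the
neighbours of `x` by at most 2. -/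
structure IsGoodOn (G : SimpleGraph V) (x : V) (S S' : Set V) (f : V → V) : Prop
    extends IsPlacementOn G S S' f where
  adj : G.Adj x (f x)
  nbr : ∀ y ∈ S, G.Adj x y → G.edist y (f y) ≤ 2

/-- A 2-placement of `B`, to be combined with a placement of a graph that meets `B` only in edges
at `u`: the neighbours of `u` move by at most 2 and stay within distance `j` of `u`. -/
structure IsHangingOn (j : ℕ) (G : SimpleGraph V) (u : V) (B : Set V) (f : V → V) : Prop
    extends IsPlacementOn G B B f where
  nbr : ∀ y ∈ B, G.Adj u y → G.edist y (f y) ≤ 2 ∧ G.edist u (f y) ≤ j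

/-- A placement of `C` from which the vertex `z` has been cut: `z` has no image and its neighbour
`z'` has no preimage, while the neighbours of `z` move by at most 2. -/
structure IsDetachedOn (G : SimpleGraph V) (z z' : V) (C : Set V) (f : V → V) : Prop
    extends IsPlacementOn G (C \ {z}) (C \ {z'}) f where
  adj : G.Adj z z'
  nbr : ∀ y ∈ C, G.Adj z y → G.edist y (f y) ≤ 2

/-- The complement of `IsDetachedOn`: a placement of `B ∪ {z, z'}`, where `z'` is a leaf at `z`, in
which `z'` has no image and `z` has no preimage. -/
structure IsGraftOn (G : SimpleGraph V) (x z z' : V) (B : Set V) (g : V → V) : Prop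
    extends IsGoodOn G x (insert z B) (insert z' B) g where
  adj_leaf : G.Adj z z'
  eq_of_adj : ∀ y, G.Adj z' y → y = z
  map_ne : g z ≠ z'
  map_not_adj : ¬ G.Adj (g z) z
  edist_map_le : G.edist (g z) z ≤ 2

theorem IsPlacementOn.of_pairwise {l : List V} (hmaps : ∀ v ∈ l, f v ∈ S')
    (hne : ∀ v ∈ l, f v ≠ v) (hdist : ∀ v ∈ l, G.edist v (f v) ≤ 4)
    (hpair : l.Pairwise fun u v =>
      f u ≠ f v ∧ (G.Adj u v → ¬ G.Adj (f u) (f v) ∧ G.edist (f u) (f v) ≤ 5)) :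
    IsPlacementOn G {v | v ∈ l} S' f := by
  have : Std.Symm fun u v =>
      f u ≠ f v ∧ (G.Adj u v → ¬ G.Adj (f u) (f v) ∧ G.edist (f u) (f v) ≤ 5) :=
    ⟨fun u v h => ⟨h.1.symm, fun huv => by
      rw [adj_comm, SimpleGraph.edist_comm]
      exact h.2 huv.symm⟩⟩
  exact ⟨hmaps, fun u hu v hv huv => by_contra fun hne => (hpair.forall hu hv hne).1 huv, hne,
    hdist, fun u hu v hv huv => (hpair.forall hu hv huv.ne).2 huv⟩

theorem IsGoodOn.isDetachedOn (h : IsGoodOn G x S S f) (hx : x ∈ S) :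
    IsDetachedOn G x (f x) S f where
  mapsTo _ hv := ⟨h.mapsTo hv.1, fun hvx => hv.2 (h.injOn hv.1 hx hvx)⟩
  injOn := h.injOn.mono Set.sdiff_subset
  ne v hv := h.ne v hv.1
  edist_le v hv := h.edist_le v hv.1
  edge u hu v hv := h.edge u hu.1 v hv.1
  adj := h.adj
  nbr := h.nbr

theorem IsPlacementOn.mono (h : IsPlacementOn H S S' f) (hle : H ≤ G)
    (hadj : ∀ u ∈ S ∪ S', ∀ v ∈ S ∪ S', G.Adj u v → H.Adj u v) : IsPlacementOn G S S' f where
  mapsTo := h.mapsTo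
  injOn := h.injOn
  ne := h.ne
  edist_le v hv := (edist_anti hle).trans (h.edist_le v hv)
  edge u hu v hv huv :=
    have ⟨hnot, hdist⟩ := h.edge u hu v hv (hadj u (.inl hu) v (.inl hv) huv)
    ⟨fun hf => hnot (hadj _ (.inr (h.mapsTo hu)) _ (.inr (h.mapsTo hv)) hf),
      (edist_anti hle).trans hdist⟩

theorem IsPlacementOn.congr (h : IsPlacementOn G S S' f) (hfg : S.EqOn f g) :
    IsPlacementOn G S S' g where
  mapsTo := h.mapsTo.congr hfg
  injOn := h.injOn.congr hfg
  ne v hv := hfg hv ▸ h.ne v hv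
  edist_le v hv := hfg hv ▸ h.edist_le v hv
  edge u hu v hv := hfg hu ▸ hfg hv ▸ h.edge u hu v hv

theorem IsPlacementOn.union (hf : IsPlacementOn G S S' f) (hg : IsPlacementOn G T T' f)
    (hST' : Disjoint S' T')
    (hcross : ∀ u ∈ S, ∀ v ∈ T, G.Adj u v → ¬ G.Adj (f u) (f v) ∧ G.edist (f u) (f v) ≤ 5) :
    IsPlacementOn G (S ∪ T) (S' ∪ T') f where
  mapsTo := hf.mapsTo.union_union hg.mapsTo
  injOn := by
    have hne : ∀ u ∈ S, ∀ v ∈ T, f u ≠ f v := fun u hu v hv =>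
      hST'.ne_of_mem (hf.mapsTo hu) (hg.mapsTo hv)
    rintro u (hu | hu) v (hv | hv) huv
    exacts [hf.injOn hu hv huv, (hne u hu v hv huv).elim, (hne v hv u hu huv.symm).elim,
      hg.injOn hu hv huv]
  ne v := Or.rec (hf.ne v) (hg.ne v)
  edist_le v := Or.rec (hf.edist_le v) (hg.edist_le v)
  edge := by
    rintro u (hu | hu) v (hv | hv) huv
    · exact hf.edge u hu v hv huv
    · exact hcross u hu v hv huv
    · rw [adj_comm, edist_comm]
      exact hcross v hv u hu huv.symm
    · exact hg.edge u hu v hv huv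

theorem exists_eqOn_eqOn (f g : V → V) (hST : Disjoint S T) :
    ∃ h, S.EqOn f h ∧ T.EqOn g h := by
  classical
  exact ⟨S.piecewise f g, (S.piecewise_eqOn f g).symm,
    ((S.piecewise_eqOn_compl f g).mono hST.subset_compl_left).symm⟩

theorem IsHangingOn.cross_edge {i j : ℕ} (hg : IsHangingOn j W u B g) (hf : IsPlacementOn H A A f)
    (hH : H.support ⊆ A) (hW : W.support ⊆ insert u B) (hAB : Disjoint A B) (hu : u ∈ A)
    (hi : H.edist u (f u) ≤ i) (hij : i + j ≤ 5) (hy : y ∈ B) (huy : W.Adj u y) :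
    ¬ (H ⊔ W).Adj (f u) (g y) ∧ (H ⊔ W).edist (f u) (g y) ≤ 5 := by
  have hfu := hf.mapsTo hu
  have hgy := hg.mapsTo hy
  constructor
  · rintro (hadj | hadj)
    · exact hAB.notMem_of_mem_right hgy (hH ⟨_, hadj.symm⟩)
    · exact (hW ⟨_, hadj⟩).elim (hf.ne u hu) (hAB.notMem_of_mem_left hfu)
  · calc (H ⊔ W).edist (f u) (g y)
      _ ≤ (H ⊔ W).edist (f u) u + (H ⊔ W).edist u (g y) := SimpleGraph.edist_triangle
      _ ≤ i + j := add_le_add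
        (edist_comm.trans_le <| (edist_anti le_sup_left).trans hi)
        ((edist_anti le_sup_right).trans (hg.nbr y hy huy).2)
      _ ≤ 5 := mod_cast hij

theorem exists_isGoodOn_glue {i j : ℕ} (hf : IsGoodOn H x A A f) (hg : IsHangingOn j W u B g)
    (hH : H.support ⊆ A) (hW : W.support ⊆ insert u B) (hAB : Disjoint A B) (hx : x ∈ A)
    (hu : u ∈ A) (hi : H.edist u (f u) ≤ i) (hij : i + j ≤ 5) :
    ∃ h, IsGoodOn (H ⊔ W) x (A ∪ B) (A ∪ B) h := by
  have hWA : ∀ ⦃v w⦄, W.Adj v w → v ∈ A → v = u := fun v w hvw hv =>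
    (hW ⟨w, hvw⟩).resolve_right (hAB.notMem_of_mem_left hv)
  have hHB : ∀ ⦃v w⦄, H.Adj v w → v ∉ B := fun v w hvw => hAB.notMem_of_mem_left (hH ⟨w, hvw⟩)
  obtain ⟨h, hfh, hgh⟩ := exists_eqOn_eqOn f g hAB
  have hA : IsPlacementOn (H ⊔ W) A A h := by
    refine (hf.congr hfh).mono le_sup_left fun v hv w hw hvw => hvw.resolve_right fun hvw => ?_
    rw [Set.union_self] at hv hw
    exact hvw.ne ((hWA hvw hv).trans (hWA hvw.symm hw).symm)
  have hB : IsPlacementOn (H ⊔ W) B B h := by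
    refine (hg.congr hgh).mono le_sup_right fun v hv w hw hvw => hvw.resolve_left fun hvw => ?_
    exact hHB hvw (by rwa [Set.union_self] at hv)
  refine ⟨h, hA.union hB hAB fun v hv w hw hvw => ?_, ?_, ?_⟩
  · obtain hvw : W.Adj v w := hvw.resolve_left fun hvw => hHB hvw.symm hw
    obtain rfl : v = u := hWA hvw hv
    rw [← hfh hv, ← hgh hw]
    exact hg.cross_edge hf.toIsPlacementOn hH hW hAB hu hi hij hw hvw
  · exact .inl (hfh hx ▸ hf.adj)
  · rintro y (hy | hy) hxy
    · have hxy : H.Adj x y := hxy.resolve_right fun hxy =>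
        hxy.ne ((hWA hxy hx).trans (hWA hxy.symm hy).symm)
      exact hfh hy ▸ (edist_anti le_sup_left).trans (hf.nbr y hy hxy)
    · have hxy : W.Adj x y := hxy.resolve_left fun hxy => hHB hxy.symm hy
      obtain rfl : x = u := hWA hxy hx
      exact hgh hy ▸ (edist_anti le_sup_right).trans (hg.nbr y hy hxy).1

theorem adj_of_adj_of_inter_subset_pair (hH : H.support ⊆ A) (hAB : A ∩ B ⊆ {z, z'})
    (hW : W.Adj z z') (hu : u ∈ B) (hx : x ∈ B) (hux : H.Adj u x) : W.Adj u x := by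
  rcases hAB ⟨hH ⟨x, hux⟩, hu⟩ with rfl | rfl <;> rcases hAB ⟨hH ⟨u, hux.symm⟩, hx⟩ with rfl | rfl
  exacts [(hux.ne rfl).elim, hW, hW.symm, (hux.ne rfl).elim]

theorem inter_insert_insert_subset_pair (hBC : Disjoint B C) :
    C ∩ insert z (insert z' B) ⊆ {z, z'} := by
  rintro v ⟨hvC, rfl | rfl | hvB⟩
  exacts [.inl rfl, .inr rfl, (hBC.notMem_of_mem_left hvB hvC).elim]

theorem IsDetachedOn.cross_edge (hf : IsDetachedOn H z z' C f) (hg : IsGraftOn W x z z' B g)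
    (hH : H.support ⊆ C) (hW : W.support ⊆ insert z (insert z' B)) (hBC : Disjoint B C)
    (hu : u ∈ C \ {z}) (hzu : H.Adj z u) :
    ¬ (H ⊔ W).Adj (f u) (g z) ∧ (H ⊔ W).edist (f u) (g z) ≤ 5 := by
  have hfu := hf.mapsTo hu
  have hgz : g z ∈ B := (hg.mapsTo (Set.mem_insert z B)).resolve_left hg.map_ne
  constructor
  · rintro (hadj | hadj)
    · exact hBC.notMem_of_mem_left hgz (hH ⟨_, hadj.symm⟩)
    · obtain hfuz | hfuz' := inter_insert_insert_subset_pair hBC ⟨hfu.1, hW ⟨_, hadj⟩⟩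
      exacts [hg.map_not_adj (hfuz ▸ hadj.symm), hfu.2 hfuz']
  · calc (H ⊔ W).edist (f u) (g z)
      _ ≤ (H ⊔ W).edist (f u) u + (H ⊔ W).edist u z + (H ⊔ W).edist z (g z) :=
        SimpleGraph.edist_triangle.trans (add_le_add_left SimpleGraph.edist_triangle _)
      _ ≤ 2 + 1 + 2 := by
        gcongr
        · exact edist_comm.trans_le <| (edist_anti le_sup_left).trans (hf.nbr u hu.1 hzu)
        · exact (edist_eq_one_iff_adj.2 (Or.inl hzu.symm)).le
        · exact edist_comm.trans_le <| (edist_anti le_sup_right).trans hg.edist_map_le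
      _ = 5 := by norm_num

theorem IsGraftOn.mem_insert_of_adj (hg : IsGraftOn W x z z' B g)
    (hW : W.support ⊆ insert z (insert z' B)) (hx : x ∈ B) (hz : z ∉ B) (hxy : W.Adj x y) :
    y ∈ insert z B := by
  have hyz' : y ≠ z' := by
    rintro rfl
    exact hz (hg.eq_of_adj x hxy.symm ▸ hx)
  exact (hW ⟨x, hxy.symm⟩).imp_right fun h => h.resolve_left hyz'

theorem exists_isGoodOn_graft (hf : IsDetachedOn H z z' C f) (hg : IsGraftOn W x z z' B g)
    (hH : H.support ⊆ C) (hW : W.support ⊆ insert z (insert z' B)) (hBC : Disjoint B C)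
    (hx : x ∈ B) : ∃ h, IsGoodOn (H ⊔ W) x (B ∪ C) (B ∪ C) h := by
  have hz : z ∈ C := hH ⟨z', hf.adj⟩
  have hz' : z' ∈ C := hH ⟨z, hf.adj.symm⟩
  have hinter : C ∩ insert z (insert z' B) ⊆ {z, z'} := inter_insert_insert_subset_pair hBC
  have hHB : ∀ ⦃v w⦄, H.Adj v w → v ∉ B := fun v w hvw => hBC.notMem_of_mem_right (hH ⟨w, hvw⟩)
  have hdisj : ∀ c, Disjoint (C \ {c}) (insert c B) := fun c =>
    Set.disjoint_insert_right.2 ⟨fun h => h.2 rfl, hBC.symm.mono_left Set.sdiff_subset⟩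
  have hunion : ∀ c ∈ C, C \ {c} ∪ insert c B = B ∪ C := fun c hc => by
    rw [Set.union_insert, ← Set.insert_union, Set.insert_sdiff_singleton, Set.insert_eq_of_mem hc,
      Set.union_comm]
  obtain ⟨h, hfh, hgh⟩ := exists_eqOn_eqOn f g (hdisj z)
  have hC : IsPlacementOn (H ⊔ W) (C \ {z}) (C \ {z'}) h := by
    have hsub : C \ {z} ∪ C \ {z'} ⊆ C := Set.union_subset Set.sdiff_subset Set.sdiff_subset
    exact (hf.congr hfh).mono le_sup_left fun v hv w hw hvw => hvw.elim id <|
      adj_of_adj_of_inter_subset_pair hW (by rwa [Set.inter_comm]) hf.adj (hsub hv) (hsub hw)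
  have hB : IsPlacementOn (H ⊔ W) (insert z B) (insert z' B) h := by
    have hsub : insert z B ∪ insert z' B ⊆ insert z (insert z' B) := by
      rw [Set.insert_union, Set.union_insert, Set.union_self]
    exact (hg.congr hgh).mono le_sup_right fun v hv w hw hvw => hvw.elim
      (adj_of_adj_of_inter_subset_pair hH hinter hg.adj_leaf (hsub hv) (hsub hw)) id
  refine ⟨h, ?_, .inr (hgh (.inr hx) ▸ hg.adj), ?_⟩
  · have := hC.union hB (hdisj z') fun v hv w hw hvw => ?_
    · rwa [hunion z hz, hunion z' hz'] at this
    rcases hw with rfl | hw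
    · have hvw : H.Adj v w := hvw.elim id <| adj_of_adj_of_inter_subset_pair hW
        (by rwa [Set.inter_comm]) hf.adj hv.1 hz
      rw [← hfh hv, ← hgh (.inl rfl)]
      exact hf.cross_edge hg hH hW hBC hv hvw.symm
    · have hvw : W.Adj v w := hvw.resolve_left fun hvw => hHB hvw.symm hw
      obtain hvz | rfl := hinter ⟨hv.1, hW ⟨w, hvw⟩⟩
      · exact (hv.2 hvz).elim
      · exact (hBC.notMem_of_mem_left hw (hg.eq_of_adj w hvw ▸ hz)).elim
  · rintro y - hxy
    have hxy : W.Adj x y := hxy.resolve_left fun hxy => hHB hxy hx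
    have hy := hg.mem_insert_of_adj hW hx (hBC.notMem_of_mem_right hz) hxy
    exact hgh hy ▸ (edist_anti le_sup_right).trans (hg.nbr y hy hxy)

end Placements

/-- Rooted trees with vertices labelled in `V`, in binary form: `join a b` hangs the tree `b` below
the root of `a`. -/
inductive LTree (V : Type*) where
  | leaf (v : V) : LTree V
  | join (a b : LTree V) : LTree V
  deriving DecidableEq

namespace LTree

section Basic

variable {V : Type*} {x u : V} {l l' hs : List (LTree V)} {b b' t t' : LTree V}

/-- The root of a labelled tree. -/
def root : LTree V → V
  | leaf v => v
  | join a _ => a.root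

/-- The labels in depth-first order, starting with the root. -/
def verts : LTree V → List V
  | leaf v => [v]
  | join a b => a.verts ++ b.verts

/-- The set of labels. -/
def vertexSet (t : LTree V) : Set V := {v | v ∈ t.verts}

/-- The number of vertices. -/
def size : LTree V → ℕ
  | leaf _ => 1
  | join a b => a.size + b.size

/-- The graph on the labels, with an edge from each vertex to each of its children. -/
def graph : LTree V → SimpleGraph V
  | leaf _ => ⊥
  | join a b => a.graph ⊔ (b.graph ⊔ edge a.root b.root)

/-- The tree with root `x` whose root has the subtrees `l` below it. -/
def node (x : V) : List (LTree V) → LTree V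
  | [] => leaf x
  | b :: l => join (node x l) b

/-- The subtrees below the root. -/
def kids : LTree V → List (LTree V)
  | leaf _ => []
  | join a b => b :: a.kids

/-- The unlabelled tree underlying a labelled tree. -/
def shape : LTree V → LTree Unit
  | leaf _ => leaf ()
  | join a b => join a.shape b.shape

theorem node_root_kids (t : LTree V) : node t.root t.kids = t := by
  induction t with
  | leaf v => rfl
  | join a b iha _ => rw [root, kids, node, iha]

theorem exists_eq_node (t : LTree V) : ∃ x l, t = node x l := ⟨_, _, t.node_root_kids.symm⟩

@[simp] theorem root_node (x : V) (l : List (LTree V)) : (node x l).root = x := by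
  induction l with
  | nil => rfl
  | cons _ _ ih => exact ih

@[simp] theorem kids_node (x : V) (l : List (LTree V)) : (node x l).kids = l := by
  induction l with
  | nil => rfl
  | cons b l ih => rw [node, kids, ih]

theorem shape_node (x : V) (l : List (LTree V)) : (node x l).shape = node () (l.map shape) := by
  induction l with
  | nil => rfl
  | cons b l ih => rw [node, shape, ih, List.map_cons, node]

theorem length_verts (t : LTree V) : t.verts.length = t.size := by
  induction t with
  | leaf v => rfl
  | join a b iha ihb => rw [verts, size, List.length_append, iha, ihb]

theorem size_shape (t : LTree V) : t.shape.size = t.size := by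
  induction t with
  | leaf v => rfl
  | join a b iha ihb => rw [shape, size, size, iha, ihb]

theorem root_mem_verts (t : LTree V) : t.root ∈ t.verts := by
  induction t with
  | leaf v => exact List.mem_singleton_self v
  | join a b iha _ => exact List.mem_append_left _ iha

theorem verts_node_perm (x : V) (l : List (LTree V)) :
    (node x l).verts.Perm (x :: l.flatMap verts) := by
  induction l with
  | nil => exact .refl _
  | cons b l ih => exact (ih.append_right _).trans (List.perm_append_comm.cons x)

theorem graph_node (x : V) (l : List (LTree V)) :
    (node x l).graph = ⨆ b ∈ l, (b.graph ⊔ edge x b.root) := by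
  induction l with
  | nil => simp [node, graph]
  | cons b l ih =>
    simp only [node, graph, ih, root_node, List.mem_cons, iSup_or]
    rw [iSup_sup_eq, iSup_iSup_eq_left, sup_comm]

theorem support_graph_subset (t : LTree V) : t.graph.support ⊆ t.vertexSet := by
  induction t with
  | leaf v => exact fun u ⟨_, hw⟩ => hw.elim
  | join a b iha ihb =>
    rintro u ⟨w, hw | hw | hw⟩
    · exact List.mem_append_left _ (iha ⟨w, hw⟩)
    · exact List.mem_append_right _ (ihb ⟨w, hw⟩)
    · obtain ⟨⟨rfl, rfl⟩ | ⟨rfl, rfl⟩, -⟩ := (edge_adj _ _ _ _).1 hw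
      exacts [List.mem_append_left _ a.root_mem_verts, List.mem_append_right _ b.root_mem_verts]

/-- `Attach t' u hs t` says that hanging the trees `hs` below the vertex `u` of `t'` gives `t`, up
to the order of children. -/
structure Attach (t' : LTree V) (u : V) (hs : List (LTree V)) (t : LTree V) : Prop where
  root_eq : t.root = t'.root
  mem : u ∈ t'.verts
  verts_perm : t.verts.Perm (t'.verts ++ hs.flatMap verts)
  graph_eq : t.graph = t'.graph ⊔ (node u hs).graph

theorem attach_root (h : l.Perm (hs ++ l')) : Attach (node x l') x hs (node x l) where
  root_eq := by rw [root_node, root_node]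
  mem := by simpa only [root_node] using (node x l').root_mem_verts
  verts_perm := by
    refine (verts_node_perm x l).trans (.trans ?_ ((verts_node_perm x l').symm.append_right _))
    have h := h.flatMap_right verts
    rw [List.flatMap_append] at h
    exact (h.trans List.perm_append_comm).cons x
  graph_eq := by
    rw [sup_comm]
    simp only [graph_node, h.mem_iff, List.mem_append, iSup_or]
    rw [iSup_sup_eq]

theorem Attach.child (h : Attach b' u hs b) (x : V) (hl : l.Perm (b :: l')) :
    Attach (node x (b' :: l')) u hs (node x l) where
  root_eq := by rw [root_node, root_node]
  mem := List.mem_append_right _ h.mem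
  verts_perm := by
    refine (verts_node_perm x l).trans <| ((hl.flatMap_right verts).cons x).trans ?_
    refine .trans ?_ ((verts_node_perm x (b' :: l')).symm.append_right _)
    simp only [List.flatMap_cons, List.cons_append, List.append_assoc]
    refine ((h.verts_perm.append_right _).trans ?_).cons x
    rw [List.append_assoc]
    exact List.perm_append_comm.append_left _
  graph_eq := by
    simp only [graph_node x, hl.mem_iff, List.mem_cons, iSup_or]
    rw [iSup_sup_eq, iSup_iSup_eq_left, iSup_sup_eq, iSup_iSup_eq_left, h.graph_eq, h.root_eq]
    ac_rfl

theorem Attach.nodup (h : Attach t' u hs t) (hn : t.verts.Nodup) : t'.verts.Nodup :=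
  (h.verts_perm.nodup_iff.1 hn).of_append_left

theorem Attach.nodup_node (h : Attach t' u hs t) (hn : t.verts.Nodup) :
    (node u hs).verts.Nodup := by
  rw [h.verts_perm.nodup_iff, List.nodup_append'] at hn
  exact (verts_node_perm u hs).nodup_iff.2 (hn.2.1.cons (hn.2.2 h.mem))

theorem Attach.size_le (h : Attach t' u hs t) : t'.size ≤ t.size := by
  have := h.verts_perm.length_eq
  rw [List.length_append, length_verts, length_verts] at this
  exact this ▸ Nat.le_add_right _ _

theorem Attach.size_lt (h : Attach t' u hs t) (hhs : hs ≠ []) : t'.size < t.size := by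
  have := h.verts_perm.length_eq
  obtain ⟨b, hs, rfl⟩ := List.exists_cons_of_ne_nil hhs
  have := List.length_pos_of_mem b.root_mem_verts
  simp only [List.flatMap_cons, List.length_append, length_verts] at *
  omega

end Basic

section Good

variable {V : Type*} {u : V} {hs : List (LTree V)} {b t t' : LTree V} {i j : ℕ}

/-- `t` has a 2-placement which is good at its root. -/
def Good (t : LTree V) : Prop := ∃ f, IsGoodOn t.graph t.root t.vertexSet t.vertexSet f

/-- The vertices of the trees `hs` have a 2-placement that can be combined with one of a tree to
which `hs` is attached at `u`; see `IsHangingOn`. -/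
def Hangs (j : ℕ) (u : V) (hs : List (LTree V)) : Prop :=
  ∃ g, IsHangingOn j (node u hs).graph u {v | v ∈ hs.flatMap verts} g

theorem Attach.good (h : Attach t' u hs t) (hn : t.verts.Nodup) {f : V → V}
    (hf : IsGoodOn t'.graph t'.root t'.vertexSet t'.vertexSet f) (hhs : Hangs j u hs)
    (hi : t'.graph.edist u (f u) ≤ i) (hij : i + j ≤ 5) : Good t := by
  obtain ⟨g, hg⟩ := hhs
  have hsupp : (node u hs).graph.support ⊆ insert u {v | v ∈ hs.flatMap verts} := fun v hv =>
    List.mem_cons.1 ((verts_node_perm u hs).mem_iff.1 (support_graph_subset _ hv))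
  have hdisj : Disjoint t'.vertexSet {v | v ∈ hs.flatMap verts} :=
    Set.disjoint_left.2 (List.disjoint_of_nodup_append (h.verts_perm.nodup_iff.1 hn))
  have hset : t.vertexSet = t'.vertexSet ∪ {v | v ∈ hs.flatMap verts} :=
    Set.ext fun v => h.verts_perm.mem_iff.trans List.mem_append
  rw [Good, h.root_eq, hset, h.graph_eq]
  exact exists_isGoodOn_glue hf hg t'.support_graph_subset hsupp hdisj t'.root_mem_verts h.mem hi
    hij

theorem Attach.good_of_nil (h : Attach t' u [] t) (ht' : Good t') : Good t := by
  obtain ⟨f, hf⟩ := ht'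
  have hset : t.vertexSet = t'.vertexSet := Set.ext fun v => by
    simpa [vertexSet] using h.verts_perm.mem_iff (a := v)
  rw [Good, h.root_eq, hset, h.graph_eq, node, graph, sup_bot_eq]
  exact ⟨f, hf⟩

theorem Good.hangs (hb : Good b) (hu : u ∉ b.verts) : Hangs 3 u [b] := by
  obtain ⟨f, hf⟩ := hb
  have hgraph : (node u [b]).graph = b.graph ⊔ edge u b.root := by
    simp only [node, graph, root, bot_sup_eq]
  have hle : b.graph ≤ (node u [b]).graph := hgraph ▸ le_sup_left
  have hadj : ∀ v ∈ b.vertexSet, ∀ w ∈ b.vertexSet,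
      (node u [b]).graph.Adj v w → b.graph.Adj v w := by
    intro v hv w hw hvw
    rw [hgraph, sup_adj, edge_adj] at hvw
    rcases hvw with hvw | ⟨⟨rfl, -⟩ | ⟨-, rfl⟩, -⟩
    exacts [hvw, (hu hv).elim, (hu hw).elim]
  have hverts : {v | v ∈ [b].flatMap verts} = b.vertexSet := by simp [vertexSet]
  rw [Hangs, hverts]
  refine ⟨f, hf.toIsPlacementOn.mono hle (by rwa [Set.union_self]), fun y hy huy => ?_⟩
  obtain rfl : y = b.root := by
    rw [hgraph, sup_adj, edge_adj] at huy
    rcases huy with huy | ⟨⟨-, rfl⟩ | ⟨-, rfl⟩, -⟩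
    exacts [(hu (b.support_graph_subset ⟨y, huy⟩)).elim, rfl, (hu hy).elim]
  have hmove : (node u [b]).graph.edist b.root (f b.root) ≤ 1 :=
    (edist_anti hle).trans (edist_eq_one_iff_adj.2 hf.adj).le
  refine ⟨hmove.trans (by norm_num), ?_⟩
  calc (node u [b]).graph.edist u (f b.root)
    _ ≤ (node u [b]).graph.edist u b.root + (node u [b]).graph.edist b.root (f b.root) :=
      SimpleGraph.edist_triangle
    _ ≤ 1 + 1 := add_le_add (edist_eq_one_iff_adj.2 huy).le hmove
    _ ≤ (3 : ℕ) := by norm_num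

end Good

section Search

variable {V α β : Type*} {t : LTree V} {e : ℕ → V} {i j k p n : ℕ}

/-- The list of the parents of the vertices in depth-first order, when the vertices are numbered in
that order starting from `k`, and the root is given the parent `p`. -/
def parents : LTree V → ℕ → ℕ → List ℕ
  | leaf _, _, p => [p]
  | join a b, k, p => a.parents k p ++ b.parents (k + a.size) k

theorem length_parents (t : LTree V) (k p : ℕ) : (t.parents k p).length = t.size := by
  induction t generalizing k p with
  | leaf v => rfl
  | join a b iha ihb => rw [parents, List.length_append, iha, ihb, size]

theorem parents_shape (t : LTree V) (k p : ℕ) : t.shape.parents k p = t.parents k p := by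
  induction t generalizing k p with
  | leaf v => rfl
  | join a b iha ihb => rw [shape, parents, parents, iha, ihb, size_shape]

theorem size_pos (t : LTree V) : 0 < t.size :=
  t.length_verts ▸ List.length_pos_of_mem t.root_mem_verts

theorem mem_parents {q : ℕ} (h : q ∈ t.parents k p) : q = p ∨ k ≤ q ∧ q < k + t.size := by
  induction t generalizing k p with
  | leaf v => exact .inl (List.mem_singleton.1 h)
  | join a b iha ihb =>
    have := a.size_pos
    rw [size]
    rcases List.mem_append.1 h with h | h
    · have := iha h
      omega
    · have := ihb h
      omega

/-- `e` numbers the vertices of `t` in depth-first order from `k` on. -/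
def IsLabelling (t : LTree V) (k : ℕ) (e : ℕ → V) : Prop :=
  t.verts = (List.range' k t.size).map e

theorem exists_isLabelling (t : LTree V) : ∃ e, t.IsLabelling 0 e := by
  refine ⟨fun i => t.verts.getD i t.root, List.ext_getElem ?_ fun i hi _ => ?_⟩
  · simp [length_verts]
  · simp [hi]

theorem IsLabelling.of_join {a b : LTree V} (h : (join a b).IsLabelling k e) :
    a.IsLabelling k e ∧ b.IsLabelling (k + a.size) e := by
  rw [IsLabelling, verts, size, ← List.range'_append_1, List.map_append] at h
  exact List.append_inj h (by simp [length_verts])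

theorem IsLabelling.root_eq (h : t.IsLabelling k e) : t.root = e k := by
  induction t with
  | leaf v => simpa [IsLabelling, verts, size, root] using h
  | join a b iha _ => exact iha h.of_join.1

theorem IsLabelling.graph_sup_edge (h : t.IsLabelling k e) :
    t.graph ⊔ edge (e p) t.root = ⨆ q ∈ (t.parents k p).zipIdx k, edge (e q.1) (e q.2) := by
  induction t generalizing k p with
  | leaf v => simp [graph, parents, h.root_eq]
  | join a b iha ihb =>
    obtain ⟨ha, hb⟩ := h.of_join
    have hunion : ∀ l l' : List (ℕ × ℕ), (⨆ q ∈ l ++ l', edge (e q.1) (e q.2)) =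
        (⨆ q ∈ l, edge (e q.1) (e q.2)) ⊔ ⨆ q ∈ l', edge (e q.1) (e q.2) := fun l l' => by
      simp only [List.mem_append, iSup_or, iSup_sup_eq]
    rw [parents, List.zipIdx_append, hunion, length_parents, ← iha ha, ← ihb hb, graph, root,
      ← ha.root_eq, sup_right_comm]

theorem IsLabelling.injOn (h : t.IsLabelling 0 e) (hn : t.verts.Nodup) :
    Set.InjOn e (Set.Iio t.size) := fun i hi j hj hij => by
  rw [h] at hn
  exact List.inj_on_of_nodup_map hn (by simpa using hi) (by simpa using hj) hij

theorem IsLabelling.eq_iff (h : t.IsLabelling 0 e) (hn : t.verts.Nodup) (hi : i < t.size)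
    (hj : j < t.size) : e i = e j ↔ i = j := (h.injOn hn).eq_iff hi hj

theorem IsLabelling.vertexSet_eq (h : t.IsLabelling 0 e) :
    t.vertexSet = {v | v ∈ (List.range t.size).map e} := by
  rw [vertexSet, show t.verts = _ from h, List.range_eq_range']

theorem IsLabelling.vertexSet_diff (h : t.IsLabelling 0 e) (hn : t.verts.Nodup) (hi : i < t.size) :
    t.vertexSet \ {e i} = {v | v ∈ ((List.range t.size).erase i).map e} := by
  ext v
  have : v ∈ t.vertexSet ↔ ∃ j < t.size, e j = v := by simp [h.vertexSet_eq]
  simp only [Set.mem_sdiff, this, Set.mem_singleton_iff, Set.mem_ofPred_eq, List.mem_map,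
    List.nodup_range.mem_erase_iff, List.mem_range]
  grind [h.eq_iff hn]

theorem getD_parents_lt (t : LTree V) (i : ℕ) : (t.parents 0 0).getD i 0 < t.size := by
  rw [List.getD_eq_getElem?_getD]
  cases hi : (t.parents 0 0)[i]? with
  | none => exact t.size_pos
  | some q =>
    have := t.size_pos
    have := mem_parents (List.mem_of_getElem? hi)
    simp only [Option.getD_some]
    omega

/-- Adjacency of the vertices numbered `i` and `j`, where `E` lists the parents and the root is its
own parent. -/
def adjIdx (E : List ℕ) (i j : ℕ) : Bool :=
  !Nat.beq i j && (Nat.beq (E.getD i 0) j || Nat.beq (E.getD j 0) i)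

/-- A sufficient condition for the distance of the vertices numbered `i` and `j` to be at most `k`:
replacing the larger number by its parent, at most `k` times, makes them equal. -/
def nearIdx (E : List ℕ) : ℕ → ℕ → ℕ → Bool
  | 0, i, j => Nat.beq i j
  | k + 1, i, j => Nat.beq i j || nearIdx E k (E.getD (max i j) 0) (min i j)

theorem IsLabelling.graph_adj (h : t.IsLabelling 0 e) {u v : V} : t.graph.Adj u v ↔
    u ≠ v ∧ ∃ i < t.size, s(e ((t.parents 0 0).getD i 0), e i) = s(u, v) := by
  have hgraph := h.graph_sup_edge (p := 0)
  rw [h.root_eq, edge_self_eq_bot, sup_bot_eq] at hgraph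
  have hmem : ∀ p i, (p, i) ∈ (t.parents 0 0).zipIdx ↔
      p = (t.parents 0 0).getD i 0 ∧ i < t.size := fun p i => by
    simp only [List.mem_zipIdx_iff_getElem?, List.getElem?_eq_some_iff, length_parents]
    grind [length_parents]
  simp only [hgraph, iSup_adj, Prod.exists, exists_prop, hmem, edge_adj, Sym2.eq_iff]
  grind

theorem IsLabelling.adj_iff (h : t.IsLabelling 0 e) (hn : t.verts.Nodup) (hi : i < t.size)
    (hj : j < t.size) : t.graph.Adj (e i) (e j) ↔ adjIdx (t.parents 0 0) i j := by
  have hadj : adjIdx (t.parents 0 0) i j ↔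
      i ≠ j ∧ ((t.parents 0 0).getD i 0 = j ∨ (t.parents 0 0).getD j 0 = i) := by
    simp [adjIdx, ← Bool.not_eq_true]
  have hp := t.getD_parents_lt
  rw [h.graph_adj, hadj]
  simp only [Sym2.eq_iff]
  constructor
  · rintro ⟨hne, q, hq, ⟨hpq, hqj⟩ | ⟨hpq, hqi⟩⟩
    · exact ⟨mt (congrArg e) hne, .inr ((h.eq_iff hn hq hj).1 hqj ▸ (h.eq_iff hn (hp q) hi).1 hpq)⟩
    · exact ⟨mt (congrArg e) hne, .inl ((h.eq_iff hn hq hi).1 hqi ▸ (h.eq_iff hn (hp q) hj).1 hpq)⟩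
  · rintro ⟨hne, rfl | rfl⟩
    · exact ⟨mt (h.eq_iff hn hi hj).1 hne, i, hi, .inr ⟨rfl, rfl⟩⟩
    · exact ⟨mt (h.eq_iff hn hi hj).1 hne, j, hj, .inl ⟨rfl, rfl⟩⟩

theorem IsLabelling.edist_le (h : t.IsLabelling 0 e) (hi : i < t.size) (hj : j < t.size)
    (hk : nearIdx (t.parents 0 0) k i j) : t.graph.edist (e i) (e j) ≤ k := by
  induction k generalizing i j with
  | zero => simp [Nat.eq_of_beq_eq_true hk]
  | succ k ih =>
    have hstep : ∀ i < t.size, t.graph.edist (e i) (e ((t.parents 0 0).getD i 0)) ≤ 1 := by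
      intro i hi
      rcases eq_or_ne (e i) (e ((t.parents 0 0).getD i 0)) with heq | hne
      · rw [← heq, edist_self]
        exact zero_le_one
      · exact (edist_eq_one_iff_adj.2 (h.graph_adj.2 ⟨hne, i, hi, Sym2.eq_swap⟩)).le
    have hmax : ∀ i j, i < t.size →
        t.graph.edist (e ((t.parents 0 0).getD i 0)) (e j) ≤ k →
          t.graph.edist (e i) (e j) ≤ (k + 1 : ℕ) := fun i j hi hk =>
      SimpleGraph.edist_triangle.trans
        ((add_le_add (hstep i hi) hk).trans (by rw [add_comm]; norm_cast))
    rw [nearIdx, Bool.or_eq_true] at hk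
    rcases hk with hk | hk
    · simp [Nat.eq_of_beq_eq_true hk]
    · rcases le_total i j with hij | hij
      · rw [max_eq_right hij, min_eq_left hij] at hk
        rw [SimpleGraph.edist_comm]
        exact hmax j i hj (ih (t.getD_parents_lt j) hi hk)
      · rw [max_eq_left hij, min_eq_right hij] at hk
        exact hmax i j hi (ih (t.getD_parents_lt i) hj hk)

/-- Backtracking: extend the list `acc` of assignments to the keys `vs`, with values from `cand`, so
that any two assignments are related by `B`. -/
def extend (cand : α → List β) (B : α × β → α × β → Bool) : List α → List (α × β) → Bool
  | [], _ => true
  | v :: vs, acc => (cand v).any fun w =>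
      acc.all (B · (v, w)) && extend cand B vs ((v, w) :: acc)

theorem exists_of_extend [Nonempty β] {cand : α → List β} {B : α × β → α × β → Bool} {vs : List α}
    {acc : List (α × β)} (h : extend cand B vs acc) (hn : vs.Nodup) :
    ∃ f : α → β, (∀ v ∈ vs, f v ∈ cand v ∧ ∀ p ∈ acc, B p (v, f v)) ∧
      vs.Pairwise fun a b => B (a, f a) (b, f b) := by
  classical
  induction vs generalizing acc with
  | nil =>
    exact ⟨fun _ => Classical.arbitrary β, by simp, .nil⟩
  | cons v vs ih =>
    rw [extend, List.any_eq_true] at h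
    obtain ⟨w, hw, h⟩ := h
    rw [Bool.and_eq_true, List.all_eq_true] at h
    obtain ⟨f, hf, hpair⟩ := ih h.2 hn.of_cons
    have hv : ∀ a ∈ vs, Function.update f v w a = f a := fun a ha =>
      Function.update_of_ne (ne_of_mem_of_not_mem ha (List.nodup_cons.1 hn).1) w f
    refine ⟨Function.update f v w, ?_, List.pairwise_cons.2 ⟨fun a ha => ?_, ?_⟩⟩
    · rintro a (_ | ⟨_, ha⟩)
      · rw [Function.update_self]
        exact ⟨hw, h.1⟩
      · rw [hv a ha]
        exact ⟨(hf a ha).1, fun p hp => (hf a ha).2 p (List.mem_cons_of_mem _ hp)⟩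
    · simpa [hv a ha] using (hf a ha).2 (v, w) List.mem_cons_self
    · exact hpair.imp_of_mem fun ha hb hab => by rwa [hv _ ha, hv _ hb]

/-- Search for a partial 2-placement (see `IsPlacementOn`) of the vertices numbered by `dom`, with
values among those numbered by `cod`, such that each `v` and its image `w` satisfy `P v w`. -/
def search (E dom cod : List ℕ) (P : ℕ → ℕ → Bool) : Bool :=
  extend (fun v => cod.filter fun w => !Nat.beq w v && nearIdx E 4 v w && P v w)
    (fun p q => !Nat.beq p.2 q.2 &&
      (!adjIdx E p.1 q.1 || !adjIdx E p.2 q.2 && nearIdx E 5 p.2 q.2)) dom []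

theorem IsLabelling.exists_isPlacementOn {dom cod : List ℕ} {P : ℕ → ℕ → Bool}
    (h : t.IsLabelling 0 e) (hn : t.verts.Nodup) (hdn : dom.Nodup) (hdom : ∀ i ∈ dom, i < t.size)
    (hcod : ∀ i ∈ cod, i < t.size) (hs : search (t.parents 0 0) dom cod P) :
    ∃ f, IsPlacementOn t.graph {v | v ∈ dom.map e} {v | v ∈ cod.map e} f ∧
      ∀ i ∈ dom, ∃ j ∈ cod, f (e i) = e j ∧ P i j := by
  obtain ⟨f, hf, hpair⟩ := exists_of_extend hs hdn
  simp only [List.mem_filter, Bool.and_eq_true, Bool.not_eq_true', ← Bool.not_eq_true,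
    Nat.beq_eq, Bool.or_eq_true] at hf hpair
  have hlt : ∀ i ∈ dom, f i < t.size := fun i hi => hcod _ (hf i hi).1.1
  obtain ⟨F, hF⟩ : ∃ F : V → V, ∀ i ∈ dom, F (e i) = e (f i) :=
    ⟨fun v => e (f (Function.invFunOn e (Set.Iio t.size) v)), fun i hi =>
      congrArg (fun k => e (f k)) ((h.injOn hn).leftInvOn_invFunOn (hdom i hi))⟩
  refine ⟨F, .of_pairwise ?_ ?_ ?_ (List.pairwise_map.2 (hpair.imp_of_mem fun hi hj hij => ?_)),
    fun i hi => ⟨f i, (hf i hi).1.1, hF i hi, (hf i hi).1.2.2⟩⟩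
  · exact List.forall_mem_map.2 fun i hi => hF i hi ▸ List.mem_map_of_mem (hf i hi).1.1
  · refine List.forall_mem_map.2 fun i hi => ?_
    rw [hF i hi, Ne, h.eq_iff hn (hlt i hi) (hdom i hi)]
    exact (hf i hi).1.2.1.1
  · exact List.forall_mem_map.2 fun i hi => hF i hi ▸
      h.edist_le (hdom i hi) (hlt i hi) (hf i hi).1.2.1.2
  · rw [hF _ hi, hF _ hj, h.adj_iff hn (hdom _ hi) (hdom _ hj),
      h.adj_iff hn (hlt _ hi) (hlt _ hj), Ne, h.eq_iff hn (hlt _ hi) (hlt _ hj)]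
    exact ⟨hij.1, fun hadj => (hij.2.resolve_left (not_not_intro hadj)).imp_right
      (h.edist_le (hlt _ hi) (hlt _ hj))⟩

/-- Search for a partial 2-placement that is good at the root; see `search` and `IsGoodOn`. -/
def searchGood (E dom cod : List ℕ) (P : ℕ → ℕ → Bool) : Bool :=
  search E dom cod fun v w =>
    (!Nat.beq v 0 || adjIdx E v w) && (!adjIdx E 0 v || nearIdx E 2 v w) && P v w

theorem IsLabelling.exists_isGoodOn {dom cod : List ℕ} {P : ℕ → ℕ → Bool}
    (h : t.IsLabelling 0 e) (hn : t.verts.Nodup) (hdn : dom.Nodup) (hdom : ∀ i ∈ dom, i < t.size)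
    (hcod : ∀ i ∈ cod, i < t.size) (h0 : 0 ∈ dom) (hs : searchGood (t.parents 0 0) dom cod P) :
    ∃ f, IsGoodOn t.graph t.root {v | v ∈ dom.map e} {v | v ∈ cod.map e} f ∧
      ∀ i ∈ dom, ∃ j ∈ cod, f (e i) = e j ∧ P i j := by
  obtain ⟨f, hf, hP⟩ := h.exists_isPlacementOn hn hdn hdom hcod hs
  simp only [Bool.and_eq_true, Bool.or_eq_true, Bool.not_eq_true', ← Bool.not_eq_true,
    Nat.beq_eq] at hP
  refine ⟨f, ⟨hf, ?_, fun y hy hadj => ?_⟩, fun i hi => ?_⟩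
  · obtain ⟨j, hj, hfj, ⟨hP, -⟩, -⟩ := hP 0 h0
    rw [h.root_eq, hfj]
    exact (h.adj_iff hn t.size_pos (hcod j hj)).2 (hP.resolve_left fun h => h rfl)
  · obtain ⟨i, hi, rfl⟩ := List.mem_map.1 hy
    obtain ⟨j, hj, hfj, ⟨-, hP⟩, -⟩ := hP i hi
    rw [h.root_eq, h.adj_iff hn t.size_pos (hdom i hi)] at hadj
    rw [hfj]
    exact h.edist_le (hdom i hi) (hcod j hj) (hP.resolve_left (not_not_intro hadj))
  · obtain ⟨j, hj, hfj, -, hP⟩ := hP i hi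
    exact ⟨j, hj, hfj, hP⟩

/-- Search for a 2-placement that is good at the root. -/
def goodIdx (s : LTree Unit) : Bool :=
  searchGood (s.parents 0 0) (.range s.size) (.range s.size) fun _ _ => true

/-- Search for a 2-placement of the vertices other than the root, as in `IsHangingOn`. -/
def hangIdx (j : ℕ) (s : LTree Unit) : Bool :=
  let E := s.parents 0 0
  search E ((List.range s.size).erase 0) ((List.range s.size).erase 0) fun v w =>
    !adjIdx E 0 v || nearIdx E 2 v w && nearIdx E j 0 w

/-- Search for a placement in which the root has no image and its last child, numbered 1, has no
preimage, as in `IsDetachedOn`. -/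
def detachIdx (s : LTree Unit) : Bool :=
  let E := s.parents 0 0
  adjIdx E 0 1 && search E ((List.range s.size).erase 0) ((List.range s.size).erase 1) fun v w =>
    !adjIdx E 0 v || nearIdx E 2 v w

/-- Search for a placement as in `IsGraftOn`, where `z` and `z'` are the last two vertices. -/
def graftIdx (s : LTree Unit) : Bool :=
  let E := s.parents 0 0
  let z := s.size - 2
  let z' := s.size - 1
  adjIdx E z z' && ((List.range s.size).all fun y => !adjIdx E z' y || Nat.beq y z) &&
    searchGood E ((List.range s.size).erase z') ((List.range s.size).erase z) fun v w =>
      !Nat.beq v z || !Nat.beq w z' && !adjIdx E w z && nearIdx E 2 w z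

theorem good_of_goodIdx (hn : t.verts.Nodup) (hs : goodIdx t.shape) : Good t := by
  obtain ⟨e, h⟩ := t.exists_isLabelling
  rw [goodIdx, size_shape, parents_shape] at hs
  have hlt : ∀ i ∈ List.range t.size, i < t.size := fun i => List.mem_range.1
  obtain ⟨f, hf, -⟩ := h.exists_isGoodOn hn List.nodup_range hlt hlt
    (List.mem_range.2 t.size_pos) hs
  exact ⟨f, by rwa [h.vertexSet_eq]⟩

theorem exists_isHangingOn_of_hangIdx (hn : t.verts.Nodup) (hs : hangIdx j t.shape) :
    ∃ f, IsHangingOn j t.graph t.root (t.vertexSet \ {t.root}) f := by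
  obtain ⟨e, h⟩ := t.exists_isLabelling
  rw [hangIdx, size_shape, parents_shape] at hs
  have hlt : ∀ i ∈ (List.range t.size).erase 0, i < t.size := fun i hi =>
    List.mem_range.1 (List.mem_of_mem_erase hi)
  obtain ⟨f, hf, hP⟩ := h.exists_isPlacementOn hn (List.nodup_range.erase 0) hlt hlt hs
  rw [← h.vertexSet_diff hn t.size_pos] at hf
  rw [h.root_eq]
  refine ⟨f, hf, fun y hy hadj => ?_⟩
  rw [h.vertexSet_diff hn t.size_pos] at hy
  obtain ⟨i, hi, rfl⟩ := List.mem_map.1 hy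
  obtain ⟨j, hj, hfj, hP⟩ := hP i hi
  rw [h.adj_iff hn t.size_pos (hlt i hi)] at hadj
  rw [hadj, Bool.not_true, Bool.false_or, Bool.and_eq_true] at hP
  rw [hfj]
  exact ⟨h.edist_le (hlt i hi) (hlt j hj) hP.1, h.edist_le t.size_pos (hlt j hj) hP.2⟩

theorem exists_isDetachedOn_of_detachIdx (hn : t.verts.Nodup) (ht : 1 < t.size)
    (hs : detachIdx t.shape) : ∃ z' f, IsDetachedOn t.graph t.root z' t.vertexSet f := by
  obtain ⟨e, h⟩ := t.exists_isLabelling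
  rw [detachIdx, size_shape, parents_shape, Bool.and_eq_true] at hs
  have hlt : ∀ c, ∀ i ∈ (List.range t.size).erase c, i < t.size := fun c i hi =>
    List.mem_range.1 (List.mem_of_mem_erase hi)
  obtain ⟨f, hf, hP⟩ := h.exists_isPlacementOn hn (List.nodup_range.erase 0) (hlt 0) (hlt 1) hs.2
  rw [← h.vertexSet_diff hn t.size_pos, ← h.vertexSet_diff hn ht] at hf
  rw [h.root_eq]
  refine ⟨e 1, f, hf, (h.adj_iff hn t.size_pos ht).2 hs.1, fun y hy hadj => ?_⟩
  have hy : y ∈ t.vertexSet \ {e 0} := ⟨hy, hadj.ne'⟩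
  rw [h.vertexSet_diff hn t.size_pos] at hy
  obtain ⟨i, hi, rfl⟩ := List.mem_map.1 hy
  obtain ⟨j, hj, hfj, hP⟩ := hP i hi
  rw [h.adj_iff hn t.size_pos (hlt 0 i hi)] at hadj
  rw [hadj, Bool.not_true, Bool.false_or] at hP
  rw [hfj]
  exact h.edist_le (hlt 0 i hi) (hlt 1 j hj) hP

theorem insert_sdiff_pair {a b : V} {S : Set V} (ha : a ∈ S) (hab : a ≠ b) :
    insert a (S \ {a, b}) = S \ {b} := by
  grind

theorem IsLabelling.exists_isGraftOn (h : t.IsLabelling 0 e) (hn : t.verts.Nodup)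
    (hsize : t.size = n + 2) (hs : graftIdx t.shape) :
    ∃ f, IsGraftOn t.graph t.root (e n) (e (n + 1)) (t.vertexSet \ {e n, e (n + 1)}) f := by
  have hz : n < t.size := by omega
  have hz' : n + 1 < t.size := by omega
  simp only [graftIdx, size_shape, parents_shape, show t.size - 2 = n by omega,
    show t.size - 1 = n + 1 by omega, Bool.and_eq_true, List.all_eq_true,
    ← h.adj_iff hn hz hz'] at hs
  obtain ⟨⟨hadj, hleaf⟩, hs⟩ := hs
  have hlt : ∀ c, ∀ i ∈ (List.range t.size).erase c, i < t.size := fun c i hi =>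
    List.mem_range.1 (List.mem_of_mem_erase hi)
  have hmem : ∀ {i}, i < t.size → i ≠ n + 1 → i ∈ (List.range t.size).erase (n + 1) := fun hi hne =>
    (List.mem_erase_of_ne hne).2 (List.mem_range.2 hi)
  have hv : ∀ i < t.size, e i ∈ t.vertexSet := fun i hi => by
    rw [h.vertexSet_eq]
    exact List.mem_map_of_mem (List.mem_range.2 hi)
  obtain ⟨f, hf, hP⟩ := h.exists_isGoodOn hn (List.nodup_range.erase (n + 1)) (hlt _) (hlt _)
    (hmem t.size_pos n.succ_ne_zero.symm) hs
  rw [← h.vertexSet_diff hn hz, ← h.vertexSet_diff hn hz', ← insert_sdiff_pair (hv n hz) hadj.ne,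
    ← insert_sdiff_pair (hv (n + 1) hz') hadj.ne', Set.pair_comm (e (n + 1))] at hf
  simp only [Bool.and_eq_true, Bool.or_eq_true, Bool.not_eq_true', ← Bool.not_eq_true,
    Nat.beq_eq] at hP hleaf
  obtain ⟨k, hk, hfk, hPk⟩ := hP n (hmem hz (mt (congrArg e) hadj.ne))
  obtain ⟨⟨hkz', hkadj⟩, hknear⟩ := hPk.resolve_left fun h => h rfl
  refine ⟨f, hf, hadj, fun y hy => ?_, ?_, ?_, ?_⟩
  · have hyv : y ∈ t.vertexSet := t.support_graph_subset ⟨_, hy.symm⟩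
    rw [h.vertexSet_eq] at hyv
    obtain ⟨i, hi, rfl⟩ := List.mem_map.1 hyv
    rw [h.adj_iff hn hz' (List.mem_range.1 hi)] at hy
    rw [(hleaf i hi).resolve_left (not_not_intro hy)]
  · rwa [hfk, Ne, h.eq_iff hn (hlt _ k hk) hz']
  · rwa [hfk, h.adj_iff hn (hlt _ k hk) hz]
  · rw [hfk]
    exact h.edist_le (hlt _ k hk) hz hknear

theorem exists_isGraftOn_of_graftIdx {z z' : V} {l : List V} (hn : t.verts.Nodup)
    (hl : t.verts = l ++ [z, z']) (hs : graftIdx t.shape) :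
    ∃ f, IsGraftOn t.graph t.root z z' {v | v ∈ l} f := by
  obtain ⟨e, h⟩ := t.exists_isLabelling
  have hsize : t.size = l.length + 2 := by rw [← length_verts, hl, List.length_append]; rfl
  have hlabel : l ++ [z, z'] = (List.range' 0 t.size).map e := hl ▸ h
  rw [hsize, ← List.range'_append_1, List.map_append] at hlabel
  have hlast := (List.append_inj hlabel (by simp)).2
  simp only [zero_add, List.range', List.map_cons, List.map_nil, List.cons.injEq, and_true] at hlast
  obtain ⟨rfl, rfl⟩ := hlast
  have hset : t.vertexSet \ {e l.length, e (l.length + 1)} = {v | v ∈ l} := by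
    rw [hl] at hn
    ext v
    simp only [vertexSet, hl, Set.mem_sdiff, Set.mem_ofPred_eq]
    grind
  exact hset ▸ h.exists_isGraftOn hn hsize hs

theorem good_of_graftIdx {C : LTree V} {x y z' : V} {f : V → V} {ms rest : List (LTree V)}
    (hn : (node x (node y (C :: ms) :: rest)).verts.Nodup)
    (hC : IsDetachedOn C.graph C.root z' C.vertexSet f)
    (hs : graftIdx (node () (node () (node () [leaf ()] :: ms.map shape) :: rest.map shape))) :
    Good (node x (node y (C :: ms) :: rest)) := by
  let s := node x (node y (node C.root [leaf z'] :: ms) :: rest)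
  let B := (node x rest).verts ++ (node y ms).verts
  have hsverts : s.verts = B ++ [C.root, z'] := (List.append_assoc _ _ _).symm
  have htverts : (node x (node y (C :: ms) :: rest)).verts = B ++ C.verts :=
    (List.append_assoc _ _ _).symm
  have hgraph : (node x (node y (C :: ms) :: rest)).graph = C.graph ⊔ s.graph := by
    have hedge : C.graph ⊔ edge C.root z' = C.graph :=
      sup_eq_left.2 ((edge_le_iff _).2 (.inr hC.adj))
    simp only [s, node, graph, root, root_node, bot_sup_eq]
    conv_lhs => rw [← hedge]
    ac_rfl
  have hz' : z' ∈ C.verts := C.support_graph_subset ⟨_, hC.adj.symm⟩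
  rw [htverts, List.nodup_append'] at hn
  have hsnodup : s.verts.Nodup := by
    rw [hsverts]
    refine hn.1.append (by simpa using hC.adj.ne) fun v hvB hv => hn.2.2 hvB ?_
    rcases List.mem_pair.1 hv with rfl | rfl
    exacts [C.root_mem_verts, hz']
  obtain ⟨g, hg⟩ := exists_isGraftOn_of_graftIdx hsnodup hsverts
    (by simpa only [s, shape_node, List.map_cons, List.map_nil, node, shape] using hs)
  have hx : x ∈ B := List.mem_append_left _ (by simpa using (node x rest).root_mem_verts)
  have hsupp : s.graph.support ⊆ insert C.root (insert z' {v | v ∈ B}) := fun v hv => by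
    have := s.support_graph_subset hv
    simp only [vertexSet, hsverts, Set.mem_ofPred_eq, List.mem_append] at this
    grind
  have hset : (node x (node y (C :: ms) :: rest)).vertexSet = {v | v ∈ B} ∪ C.vertexSet := by
    ext v
    rw [vertexSet, htverts]
    exact List.mem_append
  rw [root_node] at hg
  rw [Good, hgraph, root_node, hset]
  exact exists_isGoodOn_graft hC hg C.support_graph_subset hsupp
    (Set.disjoint_left.2 hn.2.2) hx

theorem hangs_of_hangIdx {u : V} {hs : List (LTree V)} (hn : (node u hs).verts.Nodup)
    (hj : hangIdx j (node () (hs.map shape))) : Hangs j u hs := by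
  have hperm := verts_node_perm u hs
  have hu := (List.nodup_cons.1 (hperm.nodup_iff.1 hn)).1
  have hverts : {v | v ∈ hs.flatMap verts} = (node u hs).vertexSet \ {u} := by
    ext v
    simp only [vertexSet, Set.mem_sdiff, Set.mem_ofPred_eq, hperm.mem_iff, List.mem_cons,
      Set.mem_singleton_iff]
    grind
  rw [← shape_node u] at hj
  have h := exists_isHangingOn_of_hangIdx hn hj
  rwa [root_node, ← hverts] at h

end Search

section Shapes

variable {V : Type*} {x : V} {l l' : List (LTree V)} {b t t' : LTree V}

theorem kids_shape (t : LTree V) : t.shape.kids = t.kids.map shape := by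
  induction t with
  | leaf v => rfl
  | join a b iha _ => rw [shape, kids, kids, iha, List.map_cons]

theorem shape_eq_node {s : List (LTree Unit)} : t.shape = node () s ↔ t.kids.map shape = s := by
  rw [← kids_shape, ← t.shape.node_root_kids, kids_node]
  exact ⟨fun h => by simpa using congrArg kids h, fun h => h ▸ rfl⟩

/-- The path on one vertex. -/
def path1 : LTree Unit := leaf ()

/-- The path on two vertices. -/
def path2 : LTree Unit := node () [path1]

/-- The path on three vertices, rooted at an end. -/
def path3 : LTree Unit := node () [path2]

/-- The path on three vertices, rooted at the centre. -/
def cherry : LTree Unit := node () [path1, path1]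

/-- The star with three edges, rooted at a leaf. -/
def claw : LTree Unit := node () [cherry]

/-- `t` is a star centred at the root: all children of the root are leaves. -/
def IsCentredStar (t : LTree V) : Prop := ∀ b ∈ t.kids, b.shape = path1

/-- `t` is a star, rooted at its centre or at a leaf. -/
def IsStar (t : LTree V) : Prop := t.IsCentredStar ∨ ∃ b, t.kids = [b] ∧ b.IsCentredStar

/-- `t` is the path on five vertices, rooted at the middle vertex. -/
def IsBad (t : LTree V) : Prop := t.kids.map shape = [path2, path2]

/-- `t` is not a star and its root is not a bad vertex. -/
def IsOk (t : LTree V) : Prop := ¬ t.IsStar ∧ ¬ t.IsBad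

theorem shape_eq_path1 : t.shape = path1 ↔ t.kids = [] :=
  (shape_eq_node (s := [])).trans List.map_eq_nil_iff

theorem eq_leaf_of_shape_eq_path1 (h : t.shape = path1) : ∃ p, t = leaf p := by
  cases t with
  | leaf p => exact ⟨p, rfl⟩
  | join a b => simp [shape, path1] at h

theorem isCentredStar_of_shape_eq_path1 (h : t.shape = path1) : t.IsCentredStar := by
  obtain ⟨p, rfl⟩ := eq_leaf_of_shape_eq_path1 h
  simp [IsCentredStar, kids]

theorem isCentredStar_of_shape_eq_path2 (h : t.shape = path2) : t.IsCentredStar := by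
  intro b hb
  have := List.mem_map_of_mem (f := shape) hb
  rwa [shape_eq_node.1 h, List.mem_singleton] at this

theorem IsStar.perm (h : l.Perm l') (hs : IsStar (node x l)) : IsStar (node x l') := by
  rw [IsStar, IsCentredStar, kids_node] at *
  refine hs.imp (fun hs b hb => hs b (h.mem_iff.2 hb)) fun ⟨b, hb, hs⟩ => ⟨b, ?_, hs⟩
  exact List.perm_singleton.1 (hb ▸ h.symm)

theorem IsBad.perm (h : l.Perm l') (hbad : IsBad (node x l)) : IsBad (node x l') := by
  rw [IsBad, kids_node] at *
  exact List.perm_replicate (n := 2).1 ((h.symm.map shape).trans (.of_eq hbad))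

theorem IsOk.perm (h : l.Perm l') (hok : IsOk (node x l)) : IsOk (node x l') :=
  ⟨fun hs => hok.1 (hs.perm h.symm), fun hbad => hok.2 (hbad.perm h.symm)⟩

theorem isOk_of_not_isCentredStar (hb : b ∈ l) (h : ¬ b.IsCentredStar) : IsOk (node x l) := by
  rw [IsOk, IsStar, IsBad, IsCentredStar, kids_node]
  refine ⟨?_, fun hbad => ?_⟩
  · rintro (hl | ⟨c, rfl, hc⟩)
    · exact h (isCentredStar_of_shape_eq_path1 (hl b hb))
    · exact h (List.mem_singleton.1 hb ▸ hc)
  · have := hbad ▸ List.mem_map_of_mem (f := shape) hb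
    exact h (isCentredStar_of_shape_eq_path2 (by simpa using this))

theorem isOk_of_two_le_length (hl : 2 ≤ l.length) (hb : b ∈ l) (h : b.shape ≠ path1)
    (hbad : l.map shape ≠ [path2, path2]) : IsOk (node x l) := by
  rw [IsOk, IsStar, IsBad, IsCentredStar, kids_node]
  refine ⟨?_, hbad⟩
  rintro (hstar | ⟨c, rfl, -⟩)
  exacts [h (hstar b hb), absurd hl (by simp)]

/-- `Trim t t'` says that `t'` arises from `t` by removing two of at least three leaves with the
same parent. -/
inductive Trim : LTree V → LTree V → Prop
  | leaves {x p q r : V} {l l' : List (LTree V)} (h : l.Perm (leaf p :: leaf q :: leaf r :: l')) :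
      Trim (node x l) (node x (leaf r :: l'))
  | child {x : V} {l l' : List (LTree V)} {b b' : LTree V} (h : l.Perm (b :: l'))
      (hb : Trim b b') : Trim (node x l) (node x (b' :: l'))

theorem Trim.exists_attach (h : Trim t t') : ∃ u p q, Attach t' u [leaf p, leaf q] t := by
  induction h with
  | leaves h => exact ⟨_, _, _, attach_root h⟩
  | child h _ ih =>
    obtain ⟨u, p, q, hatt⟩ := ih
    exact ⟨u, p, q, hatt.child _ h⟩

theorem Trim.good (h : Trim t t') (hn : t.verts.Nodup) (ht' : Good t') : Good t := by
  obtain ⟨u, p, q, hatt⟩ := h.exists_attach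
  obtain ⟨f, hf⟩ := ht'
  have hhang : hangIdx 1 (node () [path1, path1]) := by decide +kernel
  exact hatt.good hn hf (hangs_of_hangIdx (hatt.nodup_node hn) hhang) (hf.edist_le u hatt.mem)
    le_rfl

theorem Trim.shape_ne_path1 (h : Trim t t') : t'.shape ≠ path1 := by
  cases h <;> simp [node, shape, path1]

theorem Trim.isCentredStar (h : Trim t t') (ht' : t'.IsCentredStar) : t.IsCentredStar := by
  cases h with
  | leaves h =>
    intro b hb
    rw [kids_node, h.mem_iff] at hb
    rw [IsCentredStar, kids_node] at ht'
    rcases hb with _ | ⟨_, _ | ⟨_, hb⟩⟩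
    exacts [rfl, rfl, ht' b hb]
  | child h hb =>
    rw [IsCentredStar, kids_node] at ht'
    exact (hb.shape_ne_path1 (ht' _ List.mem_cons_self)).elim

theorem Trim.isStar (h : Trim t t') (ht' : t'.IsStar) : t.IsStar := by
  obtain ht' | ⟨c, hc, hcs⟩ := ht'
  · exact .inl (h.isCentredStar ht')
  cases h with
  | leaves h =>
    rw [kids_node, List.cons.injEq] at hc
    obtain ⟨rfl, rfl⟩ := hc
    exact .inl ((Trim.leaves h).isCentredStar fun b hb => by simp_all [shape, path1])
  | child h hb =>
    rw [kids_node, List.cons.injEq] at hc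
    obtain ⟨rfl, rfl⟩ := hc
    exact .inr ⟨_, by rw [kids_node, List.perm_singleton.1 h], hb.isCentredStar hcs⟩

theorem Trim.shape_eq_of_shape_eq_path2 (h : Trim t t') (ht' : t'.shape = path2) :
    t.shape = node () [path1, path1, path1] := by
  replace ht' := shape_eq_node.1 ht'
  refine shape_eq_node.2 ?_
  cases h with
  | leaves h =>
    obtain rfl : _ = [] := by simpa [shape, path1] using ht'
    rw [kids_node]
    exact List.perm_replicate (n := 3).1 (h.map shape)
  | child h hb =>
    rw [kids_node, List.map_cons, List.cons.injEq] at ht'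
    exact (hb.shape_ne_path1 ht'.1).elim

theorem Trim.good_of_isBad (h : Trim t t') (hn : t.verts.Nodup) (ht' : t'.IsBad) : Good t := by
  rw [IsBad] at ht'
  cases h with
  | leaves h => simp [kids, shape, path2, node] at ht'
  | @child x _ _ _ _ h hb =>
    rw [kids_node, List.map_cons, List.cons.injEq] at ht'
    have hatt := attach_root (hs := []) (x := x) h
    refine hatt.good_of_nil (good_of_goodIdx (hatt.nodup hn) ?_)
    rw [shape_node, List.map_cons, hb.shape_eq_of_shape_eq_path2 ht'.1, ht'.2]
    decide +kernel

/-- No vertex of `t` has three children that are leaves. -/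
def IsTrimmed (t : LTree V) : Prop := ∀ t', ¬ Trim t t'

theorem IsTrimmed.of_mem (h : IsTrimmed (node x l)) (hb : b ∈ l) : b.IsTrimmed := by
  classical
  exact fun b' hb' => h _ (.child (List.perm_cons_erase hb) hb')

/-- The shapes of the trimmed stars that are rooted at the centre; see `IsTrimmed`. -/
def trimmedCentredStars : List (LTree Unit) := [path1, path2, cherry]

/-- The shapes of the trimmed stars; see `IsTrimmed`. -/
def trimmedStars : List (LTree Unit) := trimmedCentredStars ++ [path3, claw]

theorem IsTrimmed.shape_of_isCentredStar (h : t.IsTrimmed) (ht : t.IsCentredStar) :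
    t.shape ∈ trimmedCentredStars := by
  obtain ⟨x, l, rfl⟩ := t.exists_eq_node
  rw [IsCentredStar, kids_node] at ht
  rw [shape_node]
  match l with
  | [] => simp [trimmedCentredStars, path1, node]
  | [b] => simp [trimmedCentredStars, path2, ht b]
  | [b, c] => simp [trimmedCentredStars, cherry, ht b, ht c]
  | b :: c :: d :: l =>
    obtain ⟨p, rfl⟩ := eq_leaf_of_shape_eq_path1 (ht b (by simp))
    obtain ⟨q, rfl⟩ := eq_leaf_of_shape_eq_path1 (ht c (by simp))
    obtain ⟨r, rfl⟩ := eq_leaf_of_shape_eq_path1 (ht d (by simp))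
    exact (h _ (.leaves (.refl _))).elim

theorem IsTrimmed.shape_of_isStar (h : t.IsTrimmed) (ht : t.IsStar) (hc : ¬ t.IsCentredStar) :
    t.shape ∈ [path3, claw] := by
  obtain ⟨b, hb, hbs⟩ := ht.resolve_left hc
  obtain ⟨x, l, rfl⟩ := t.exists_eq_node
  rw [kids_node] at hb
  subst hb
  have hb1 : b.shape ≠ path1 := fun hb1 => hc (by simpa [IsCentredStar] using hb1)
  have := (h.of_mem (List.mem_singleton_self b)).shape_of_isCentredStar hbs
  rw [shape_node]
  simp only [trimmedCentredStars, List.mem_cons, List.not_mem_nil, or_false, hb1, false_or] at this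
  rcases this with hb | hb <;> simp [hb, path3, claw]

theorem IsTrimmed.shape_mem_trimmedStars (h : t.IsTrimmed) (ht : t.IsStar) :
    t.shape ∈ trimmedStars := by
  by_cases hc : t.IsCentredStar
  · exact List.mem_append_left _ (h.shape_of_isCentredStar hc)
  · exact List.mem_append_right _ (h.shape_of_isStar ht hc)

end Shapes

section Induction

variable {V : Type*} {x y u : V} {l l' hs m m' rest : List (LTree V)}
    {b C S S' t t' : LTree V} {n : ℕ}

theorem eq_or_adj_root (hb : b ∈ l) : x = b.root ∨ (node x l).graph.Adj x b.root := by
  rw [← edge_le_iff, graph_node]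
  exact le_sup_right.trans (le_iSup₂ (f := fun b (_ : b ∈ l) => b.graph ⊔ edge x b.root) b hb)

theorem size_lt_of_mem (hb : b ∈ l) : b.size < (node x l).size := by
  induction l with
  | nil => simp at hb
  | cons c l ih =>
    rw [node, size]
    rcases List.mem_cons.1 hb with rfl | hb
    · exact Nat.lt_add_of_pos_left (size_pos _)
    · exact (ih hb).trans_le (Nat.le_add_right _ _)

/-- The induction hypothesis of `IsOk.good`. -/
def GoodBelow (V : Type*) (n : ℕ) : Prop :=
  ∀ t : LTree V, t.size < n → t.verts.Nodup → t.IsOk → t.Good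

/-- The trees `hs` can be removed from any vertex at distance at most 2 from its image. -/
def Hangable (hs : List (LTree V)) : Prop :=
  hs ≠ [] ∧ ∀ u, (node u hs).verts.Nodup → Hangs 3 u hs

theorem Attach.good_of_hangable (h : Attach t' u hs t) (ih : GoodBelow V n) (hn : t.verts.Nodup)
    (ht : t.size ≤ n) (hhs : Hangable hs) (hok : t'.IsOk)
    (hu : u = t'.root ∨ t'.graph.Adj t'.root u) : Good t := by
  obtain ⟨f, hf⟩ := ih t' ((h.size_lt hhs.1).trans_le ht) (h.nodup hn) hok
  have hmove : t'.graph.edist u (f u) ≤ 2 := by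
    rcases hu with rfl | hu
    · exact (edist_eq_one_iff_adj.2 hf.adj).trans_le (by norm_num)
    · exact hf.nbr u h.mem hu
  exact h.good hn hf (hhs.2 u (h.nodup_node hn)) hmove le_rfl

theorem good_of_hangable_root (ih : GoodBelow V n) (hn : (node x l).verts.Nodup)
    (ht : (node x l).size ≤ n) (hl : l.Perm (hs ++ l')) (hhs : Hangable hs)
    (hok : IsOk (node x l')) : Good (node x l) :=
  (attach_root hl).good_of_hangable ih hn ht hhs hok (.inl (root_node x l').symm)

theorem good_of_hangable_child (ih : GoodBelow V n) (hn : (node x (node y m :: rest)).verts.Nodup)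
    (ht : (node x (node y m :: rest)).size ≤ n) (hm : m.Perm (hs ++ m')) (hhs : Hangable hs)
    (hok : IsOk (node x (node y m' :: rest))) : Good (node x (node y m :: rest)) := by
  have hatt := (attach_root hm (x := y)).child x (.refl (node y m :: rest))
  have hy := eq_or_adj_root (x := x) (List.mem_cons_self (a := node y m') (l := rest))
  rw [root_node] at hy
  refine hatt.good_of_hangable ih hn ht hhs hok ?_
  rw [root_node]
  exact hy.imp_left Eq.symm

theorem hangable_of_not_isStar (ih : GoodBelow V n) (hb : b.size < n) (hs : ¬ b.IsStar) :
    Hangable [b] := by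
  refine ⟨List.cons_ne_nil _ _, fun u hn => ?_⟩
  by_cases hbad : b.IsBad
  · refine hangs_of_hangIdx hn ?_
    rw [List.map_singleton, shape_eq_node.2 hbad]
    decide +kernel
  · have hn : (u :: b.verts).Nodup := hn
    exact (ih b hb hn.of_cons ⟨hs, hbad⟩).hangs (List.nodup_cons.1 hn).1

theorem hangable_pair (hS : S.shape ∈ trimmedStars) (hS' : S'.shape ∈ trimmedStars) :
    Hangable [S, S'] := by
  have hsearch : ∀ s ∈ trimmedStars, ∀ s' ∈ trimmedStars, hangIdx 3 (node () [s, s']) := by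
    decide +kernel
  exact ⟨List.cons_ne_nil _ _, fun u hn => hangs_of_hangIdx hn (hsearch _ hS _ hS')⟩

/-- The lists consisting of at most one element of `trimmedStars`. -/
def shortLists : List (List (LTree Unit)) := [] :: trimmedStars.map fun s => [s]

theorem length_le_one_of_map_mem_shortLists (h : l.map shape ∈ shortLists) : l.length ≤ 1 := by
  have hlen : ∀ r ∈ shortLists, r.length ≤ 1 := by decide +kernel
  exact l.length_map shape ▸ hlen _ h

theorem map_mem_shortLists_or_exists_hangable (ih : GoodBelow V n)
    (hl : ∀ b ∈ l, b.IsTrimmed ∧ b.size < n) :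
    l.map shape ∈ shortLists ∨ ∃ hs l', l.Perm (hs ++ l') ∧ Hangable hs := by
  classical
  by_cases hstar : ∀ b ∈ l, b.IsStar
  · have hshape : ∀ b ∈ l, b.shape ∈ trimmedStars := fun b hb =>
      (hl b hb).1.shape_mem_trimmedStars (hstar b hb)
    match l with
    | [] => exact .inl List.mem_cons_self
    | [S] => exact .inl (List.mem_cons_of_mem _ (List.mem_map_of_mem (hshape S (by simp))))
    | S :: S' :: l =>
      exact .inr ⟨[S, S'], l, .refl _, hangable_pair (hshape S (by simp)) (hshape S' (by simp))⟩
  · push Not at hstar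
    obtain ⟨b, hb, hbs⟩ := hstar
    exact .inr ⟨[b], l.erase b, List.perm_cons_erase hb, hangable_of_not_isStar ih (hl b hb).2 hbs⟩

theorem exists_isDetachedOn (ih : GoodBelow V n) (hn : C.verts.Nodup) (hC : C.size < n)
    (hs : ¬ C.IsStar) : ∃ z' f, IsDetachedOn C.graph C.root z' C.vertexSet f := by
  by_cases hbad : C.IsBad
  · have hshape := shape_eq_node.2 hbad
    have hsize := congrArg size hshape
    rw [size_shape] at hsize
    refine exists_isDetachedOn_of_detachIdx hn (hsize ▸ by decide +kernel) (hshape ▸ ?_)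
    decide +kernel
  · obtain ⟨f, hf⟩ := ih C hC hn ⟨hs, hbad⟩
    exact ⟨_, f, hf.isDetachedOn C.root_mem_verts⟩

end Induction

section Cases

variable {V : Type*} {x y : V} {l ms rest : List (LTree V)} {C N S R Q t t' : LTree V} {n : ℕ}

theorem isOk_or_mem (hms : ms.length ≤ 1) (hrest : rest.length ≤ 1) :
    IsOk (node x (node y ms :: rest)) ∨ (ms.map shape, rest.map shape) ∈
      [([], []), ([], [path1]), ([path1], []), ([path1], [path2])] := by
  rw [or_iff_not_imp_left, IsOk, ← not_or, not_not, IsStar, IsBad, IsCentredStar, kids_node]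
  rintro ((h | ⟨b, hb, hb'⟩) | h)
  · obtain rfl : ms = [] := by
      simpa only [kids_node] using shape_eq_path1.1 (h _ List.mem_cons_self)
    match rest with
    | [] => simp
    | [S] => simp [h S (by simp)]
  · obtain ⟨rfl, rfl⟩ := List.cons.inj hb
    rw [IsCentredStar, kids_node] at hb'
    match ms with
    | [] => simp
    | [S] => simp [hb' S (by simp)]
  · obtain ⟨h, h'⟩ := List.cons.inj h
    have := shape_eq_node.1 h
    rw [kids_node] at this
    simp [this, h']

theorem good_of_child_isStar (hn : (node x (N :: rest)).verts.Nodup) (hN : N.IsTrimmed)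
    (hs : N.IsStar) (hc : ¬ N.IsCentredStar) (hrest : rest.map shape ∈ shortLists) :
    Good (node x (N :: rest)) := by
  have hsearch : ∀ s ∈ [path3, claw], ∀ r ∈ shortLists, goodIdx (node () (s :: r)) := by
    decide +kernel
  refine good_of_goodIdx hn ?_
  rw [shape_node, List.map_cons]
  exact hsearch _ (hN.shape_of_isStar hs hc) _ hrest

theorem good_of_grandchild_not_isStar (ih : GoodBelow V n)
    (hn : (node x (node y (C :: ms) :: rest)).verts.Nodup)
    (ht : (node x (node y (C :: ms) :: rest)).size ≤ n) (hC : ¬ C.IsStar) (hms : ms.length ≤ 1)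
    (hrest : rest.length ≤ 1) : Good (node x (node y (C :: ms) :: rest)) := by
  have hCsize : C.size < n :=
    (size_lt_of_mem (x := y) List.mem_cons_self).trans
      ((size_lt_of_mem (x := x) List.mem_cons_self).trans_le ht)
  rcases isOk_or_mem (x := x) (y := y) hms hrest with hok | hmem
  · exact good_of_hangable_child ih hn ht (.refl _) (hangable_of_not_isStar ih hCsize hC) hok
  · have hCn : C.verts.Nodup := (List.nodup_append'.1 (List.nodup_append'.1 hn).2.1).2.1
    obtain ⟨z', f, hf⟩ := exists_isDetachedOn ih hCn hCsize hC
    have hsearch : ∀ p ∈ [([], []), ([], [path1]), ([path1], []), ([path1], [path2])],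
        graftIdx (node () (node () (node () [leaf ()] :: p.1) :: p.2)) := by decide +kernel
    exact good_of_graftIdx hn hf (hsearch _ hmem)

theorem good_of_grandchild_isStar (ih : GoodBelow V n)
    (hn : (node x (node y (C :: ms) :: rest)).verts.Nodup)
    (ht : (node x (node y (C :: ms) :: rest)).size ≤ n) (hN : ¬ IsStar (node y (C :: ms)))
    (hCt : C.IsTrimmed) (hCs : C.IsStar) (hC : C.shape ≠ path1)
    (hms : ms.map shape ∈ shortLists) (hrest : rest.map shape ∈ shortLists) :
    Good (node x (node y (C :: ms) :: rest)) := by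
  rcases eq_or_ne ms [] with rfl | hne
  · have hsearch : ∀ c ∈ [path3, claw], ∀ r ∈ shortLists,
        goodIdx (node () (node () [c] :: r)) := by
      decide +kernel
    have hCc : ¬ C.IsCentredStar := fun h => hN (.inr ⟨C, kids_node _ _, h⟩)
    refine good_of_goodIdx hn ?_
    rw [shape_node, List.map_cons, shape_node]
    exact hsearch _ (hCt.shape_of_isStar hCs hCc) _ hrest
  obtain ⟨S, rfl⟩ := List.length_eq_one_iff.1 <|
    (length_le_one_of_map_mem_shortLists hms).antisymm (List.length_pos_iff.2 hne)
  have hS : S.shape ∈ trimmedStars := by simpa [shortLists] using hms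
  have hC' := hCt.shape_mem_trimmedStars hCs
  rcases isOk_or_mem (ms := []) (x := x) (y := y) (Nat.zero_le _)
    (length_le_one_of_map_mem_shortLists hrest) with hok | hmem
  · exact good_of_hangable_child ih hn ht (.refl [C, S]) (hangable_pair hC' hS) hok
  · have hsearch : ∀ c ∈ trimmedStars, c ≠ path1 → ∀ s ∈ trimmedStars, ∀ r ∈ [[], [path1]],
        goodIdx (node () (node () [c, s] :: r)) := by
      decide +kernel
    refine good_of_goodIdx hn ?_
    rw [shape_node, List.map_cons, shape_node]
    exact hsearch _ hC' hC _ hS _ (by simpa using hmem)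

theorem good_of_child_not_isStar (ih : GoodBelow V n) (hn : (node x (N :: rest)).verts.Nodup)
    (ht : (node x (N :: rest)).size ≤ n) (hN : ¬ N.IsStar) (htrim : N.IsTrimmed)
    (hrest : rest.map shape ∈ shortLists) : Good (node x (N :: rest)) := by
  classical
  obtain ⟨y, m, rfl⟩ := N.exists_eq_node
  obtain ⟨C, hC, hC1⟩ : ∃ C ∈ m, C.shape ≠ path1 := by
    by_contra! h
    exact hN (.inl (by rwa [IsCentredStar, kids_node]))
  obtain ⟨ms, hm⟩ : ∃ ms, m.Perm (C :: ms) := ⟨_, List.perm_cons_erase hC⟩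
  have hmem : ∀ b ∈ C :: ms, b ∈ m := fun b => hm.mem_iff.2
  have hatt := (attach_root (hs := []) hm (x := y)).child x (.refl (node y m :: rest))
  refine hatt.good_of_nil ?_
  replace hn := hatt.nodup hn
  replace ht := hatt.size_le.trans ht
  replace hN : ¬ IsStar (node y (C :: ms)) := fun h => hN (h.perm hm.symm)
  have hms : ∀ b ∈ ms, b.IsTrimmed ∧ b.size < n := fun b hb =>
    ⟨htrim.of_mem (hmem b (List.mem_cons_of_mem C hb)),
      (size_lt_of_mem (x := y) (List.mem_cons_of_mem C hb)).trans
      ((size_lt_of_mem (x := x) List.mem_cons_self).trans_le ht)⟩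
  rcases map_mem_shortLists_or_exists_hangable ih hms with hshort | ⟨hs, m', hperm, hhs⟩
  · by_cases hCs : C.IsStar
    · exact good_of_grandchild_isStar ih hn ht hN (htrim.of_mem hC) hCs hC1 hshort hrest
    · exact good_of_grandchild_not_isStar ih hn ht hCs
        (length_le_one_of_map_mem_shortLists hshort) (length_le_one_of_map_mem_shortLists hrest)
  · have hok : IsOk (node x (node y (C :: m') :: rest)) :=
      isOk_of_not_isCentredStar List.mem_cons_self fun h =>
        hC1 (h C (by rw [kids_node]; exact List.mem_cons_self))
    exact good_of_hangable_child ih hn ht ((hperm.cons C).trans List.perm_middle.symm) hhs hok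

theorem good_of_child_not_isCentredStar (ih : GoodBelow V n)
    (hn : (node x (N :: rest)).verts.Nodup) (ht : (node x (N :: rest)).size ≤ n)
    (hN : ¬ N.IsCentredStar) (htrim : ∀ b ∈ N :: rest, b.IsTrimmed) :
    Good (node x (N :: rest)) := by
  obtain ⟨hNt, hrt⟩ := List.forall_mem_cons.1 htrim
  have hrest : ∀ b ∈ rest, b.IsTrimmed ∧ b.size < n := fun b hb =>
    ⟨hrt b hb, (size_lt_of_mem (List.mem_cons_of_mem N hb)).trans_le ht⟩
  rcases map_mem_shortLists_or_exists_hangable ih hrest with hshort | ⟨hs, l', hperm, hhs⟩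
  · by_cases hNs : N.IsStar
    · exact good_of_child_isStar hn hNt hNs hN hshort
    · exact good_of_child_not_isStar ih hn ht hNs hNt hshort
  · exact good_of_hangable_root ih hn ht ((hperm.cons N).trans List.perm_middle.symm) hhs
      (isOk_of_not_isCentredStar List.mem_cons_self hN)

theorem good_of_three_siblings (ih : GoodBelow V n)
    (hn : (node x (N :: S :: R :: Q :: l)).verts.Nodup)
    (ht : (node x (N :: S :: R :: Q :: l)).size ≤ n) (hN : N.shape ≠ path1)
    (hS : S.shape ∈ trimmedCentredStars) (hR : R.shape ∈ trimmedCentredStars) :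
    Good (node x (N :: S :: R :: Q :: l)) := by
  by_cases hbad : (N :: Q :: l).map shape = [path2, path2]
  · have hsearch : ∀ s ∈ trimmedCentredStars, ∀ r ∈ trimmedCentredStars,
        goodIdx (node () [path2, s, r, path2]) := by
      decide +kernel
    refine good_of_goodIdx hn ?_
    obtain ⟨hN2, hQ2⟩ := List.cons.inj hbad
    rw [shape_node, List.map_cons, List.map_cons, List.map_cons, hN2, hQ2]
    exact hsearch _ hS _ hR
  · have hperm : (N :: S :: R :: Q :: l).Perm ([S, R] ++ (N :: Q :: l)) :=
      List.perm_middle (l₁ := [S, R]).symm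
    exact good_of_hangable_root ih hn ht hperm
      (hangable_pair (List.mem_append_left _ hS) (List.mem_append_left _ hR))
      (isOk_of_two_le_length (by simp) List.mem_cons_self hN hbad)

theorem good_of_forall_isCentredStar (ih : GoodBelow V n) (hn : (node x (N :: rest)).verts.Nodup)
    (ht : (node x (N :: rest)).size ≤ n) (hok : IsOk (node x (N :: rest)))
    (htrim : ∀ b ∈ N :: rest, b.IsTrimmed) (hcentred : ∀ b ∈ N :: rest, b.IsCentredStar)
    (hN : N.shape ≠ path1) : Good (node x (N :: rest)) := by
  have hshape : ∀ b ∈ N :: rest, b.shape ∈ trimmedCentredStars := fun b hb =>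
    (htrim b hb).shape_of_isCentredStar (hcentred b hb)
  obtain ⟨hNs, hrs⟩ := List.forall_mem_cons.1 hshape
  match rest with
  | [] => exact (hok.1 (.inr ⟨N, kids_node _ _, hcentred N List.mem_cons_self⟩)).elim
  | [S] =>
    have hsearch : ∀ a ∈ trimmedCentredStars, a ≠ path1 → ∀ s ∈ trimmedCentredStars,
        [a, s] ≠ [path2, path2] → goodIdx (node () [a, s]) := by
      decide +kernel
    have hbad : [N.shape, S.shape] ≠ [path2, path2] := fun h => hok.2 (by rwa [IsBad, kids_node])
    refine good_of_goodIdx hn ?_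
    rw [shape_node]
    exact hsearch _ hNs hN _ (hrs S (by simp)) hbad
  | [S, R] =>
    have hsearch : ∀ a ∈ trimmedCentredStars, a ≠ path1 → ∀ s ∈ trimmedCentredStars,
        ∀ r ∈ trimmedCentredStars, goodIdx (node () [a, s, r]) := by
      decide +kernel
    refine good_of_goodIdx hn ?_
    rw [shape_node]
    exact hsearch _ hNs hN _ (hrs S (by simp)) _ (hrs R (by simp))
  | S :: R :: Q :: l =>
    exact good_of_three_siblings ih hn ht hN (hrs S (by simp)) (hrs R (by simp))

theorem IsTrimmed.good (h : t.IsTrimmed) (ih : GoodBelow V t.size) (hn : t.verts.Nodup)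
    (hok : t.IsOk) : Good t := by
  classical
  obtain ⟨x, l, rfl⟩ := t.exists_eq_node
  suffices hgood : ∀ N rest, l.Perm (N :: rest) → ¬ N.IsCentredStar ∨
      (∀ b ∈ l, b.IsCentredStar) ∧ N.shape ≠ path1 → Good (node x l) by
    by_cases hcentred : ∀ b ∈ l, b.IsCentredStar
    · obtain ⟨N, hN, hN1⟩ : ∃ N ∈ l, N.shape ≠ path1 := by
        by_contra! hl
        exact hok.1 (.inl (by rwa [IsCentredStar, kids_node]))
      exact hgood N _ (List.perm_cons_erase hN) (.inr ⟨hcentred, hN1⟩)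
    · push Not at hcentred
      obtain ⟨N, hN, hNc⟩ := hcentred
      exact hgood N _ (List.perm_cons_erase hN) (.inl hNc)
  intro N rest hperm hN
  have hatt := attach_root (hs := []) (x := x) hperm
  have hmem : ∀ b ∈ N :: rest, b ∈ l := fun b => hperm.mem_iff.2
  have htrim : ∀ b ∈ N :: rest, b.IsTrimmed := fun b hb => h.of_mem (hmem b hb)
  refine hatt.good_of_nil ?_
  rcases hN with hN | ⟨hcentred, hN⟩
  · exact good_of_child_not_isCentredStar ih (hatt.nodup hn) hatt.size_le hN htrim
  · exact good_of_forall_isCentredStar ih (hatt.nodup hn) hatt.size_le (hok.perm hperm) htrim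
      (fun b hb => hcentred b (hmem b hb)) hN

theorem Trim.size_lt (h : Trim t t') : t'.size < t.size := by
  obtain ⟨_, _, _, hatt⟩ := h.exists_attach
  exact hatt.size_lt (List.cons_ne_nil _ _)

theorem Trim.nodup (h : Trim t t') (hn : t.verts.Nodup) : t'.verts.Nodup := by
  obtain ⟨_, _, _, hatt⟩ := h.exists_attach
  exact hatt.nodup hn

theorem IsOk.good (hok : t.IsOk) (hn : t.verts.Nodup) : Good t := by
  suffices ih : GoodBelow V (t.size + 1) from ih t t.size.lt_succ_self hn hok
  generalize t.size + 1 = n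
  induction n with
  | zero => exact fun t ht => absurd ht t.size.not_lt_zero
  | succ n ih =>
    intro t ht hn hok
    have ih : GoodBelow V t.size := fun t' ht' => ih t' (ht'.trans_le (Nat.le_of_lt_succ ht))
    by_cases htrim : t.IsTrimmed
    · exact htrim.good ih hn hok
    simp only [IsTrimmed, not_forall, not_not] at htrim
    obtain ⟨t', ht'⟩ := htrim
    by_cases hbad : t'.IsBad
    · exact ht'.good_of_isBad hn hbad
    · exact ht'.good hn (ih t' ht'.size_lt (ht'.nodup hn) ⟨mt ht'.isStar hok.1, hbad⟩)

end Cases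

section Link

variable {V : Type*} {G : SimpleGraph V} {x u v w : V} {l : List (LTree V)} {t : LTree V}

theorem mem_verts_node : w ∈ (node x l).verts ↔ w = x ∨ ∃ b ∈ l, w ∈ b.verts := by
  rw [(verts_node_perm x l).mem_iff, List.mem_cons, List.mem_flatMap]

theorem exists_attach (hs : List (LTree V)) (hu : u ∈ t.verts) : ∃ t', Attach t u hs t' := by
  induction t with
  | leaf v =>
    obtain rfl := List.mem_singleton.1 hu
    exact ⟨node u hs, attach_root (l' := []) (by rw [List.append_nil])⟩
  | join a b iha ihb =>
    rcases List.mem_append.1 hu with hu | hu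
    · obtain ⟨a', ha⟩ := iha hu
      refine ⟨join a' b, ha.root_eq, List.mem_append_left _ hu, ?_, ?_⟩
      · simp only [verts, List.append_assoc]
        exact (ha.verts_perm.append_right _).trans
          (by rw [List.append_assoc]; exact List.perm_append_comm.append_left _)
      · rw [graph, graph, ha.graph_eq, ha.root_eq, sup_right_comm]
    · obtain ⟨b', hb⟩ := ihb hu
      have hjoin : ∀ c : LTree V, join a c = node a.root (c :: a.kids) := fun c => by
        rw [node, node_root_kids]
      exact ⟨join a b', by rw [hjoin, hjoin]; exact hb.child a.root (.refl (b' :: a.kids))⟩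

theorem reachable_root (hv : v ∈ t.verts) : t.graph.Reachable t.root v := by
  induction t with
  | leaf w => rw [List.mem_singleton.1 hv, root]
  | join a b iha ihb =>
    have hedge : (join a b).graph.Reachable a.root b.root := by
      rcases (edge_le_iff (join a b).graph).1 (le_sup_right.trans le_sup_right) with h | h
      exacts [h ▸ .rfl, h.reachable]
    rcases List.mem_append.1 hv with hv | hv
    · exact (iha hv).mono le_sup_left
    · exact hedge.trans ((ihb hv).mono (le_sup_left.trans le_sup_right))

theorem exists_size_lt (hG : G.Connected) (hn : t.verts.Nodup) (ht : t.graph ≤ G)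
    (hv : v ∉ t.verts) :
    ∃ t' : LTree V, t'.root = t.root ∧ t'.verts.Nodup ∧ t'.graph ≤ G ∧ t.size < t'.size := by
  obtain ⟨p⟩ := hG.preconnected t.root v
  obtain ⟨d, -, hd, hd'⟩ := p.exists_boundary_dart t.vertexSet t.root_mem_verts hv
  obtain ⟨t', h⟩ := exists_attach [leaf d.snd] hd
  refine ⟨t', h.root_eq, ?_, ?_, h.size_lt (List.cons_ne_nil _ _)⟩
  · rw [h.verts_perm.nodup_iff]
    exact hn.append (List.nodup_singleton _) (List.disjoint_singleton.2 hd')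
  · rw [h.graph_eq]
    refine sup_le ht ?_
    simpa only [node, graph, root, bot_sup_eq] using (edge_le_iff G).2 (.inr d.adj)

theorem exists_graph_eq [Finite V] (hG : G.IsTree) (x : V) :
    ∃ t : LTree V, t.root = x ∧ t.verts.Nodup ∧ (∀ v, v ∈ t.verts) ∧ t.graph = G := by
  have := Fintype.ofFinite V
  let sizes : Set ℕ := {n | ∃ t : LTree V, t.root = x ∧ t.verts.Nodup ∧ t.graph ≤ G ∧ t.size = n}
  have hne : sizes.Nonempty := ⟨1, leaf x, rfl, List.nodup_singleton x, bot_le, rfl⟩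
  have hbdd : BddAbove sizes := ⟨Fintype.card V, by
    rintro _ ⟨t, -, hn, -, rfl⟩
    exact t.length_verts ▸ hn.length_le_card⟩
  obtain ⟨_, ⟨t, hx, hn, hle, rfl⟩, hmax⟩ := hbdd.exists_isGreatest_of_nonempty hne
  have hall : ∀ v, v ∈ t.verts := fun v => by
    by_contra hv
    obtain ⟨t', hroot, hn', hle', hlt⟩ := exists_size_lt hG.connected hn hle hv
    exact hlt.not_ge (hmax ⟨t', hroot.trans hx, hn', hle', rfl⟩)
  have hconn : t.graph.Connected :=
    (connected_iff_exists_forall_reachable _).2 ⟨t.root, fun v => reachable_root (hall v)⟩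
  exact ⟨t, hx, hn, hall, hle.antisymm ((isTree_iff_minimal_connected.1 hG).2 hconn hle)⟩

theorem IsCentredStar.adj_root (h : t.IsCentredStar) (hw : w ∈ t.verts) (hne : w ≠ t.root) :
    t.graph.Adj t.root w := by
  obtain ⟨x, l, rfl⟩ := t.exists_eq_node
  rw [root_node] at hne ⊢
  obtain ⟨b, hb, hwb⟩ := (mem_verts_node.1 hw).resolve_left hne
  rw [IsCentredStar, kids_node] at h
  obtain ⟨p, rfl⟩ := eq_leaf_of_shape_eq_path1 (h b hb)
  obtain rfl := List.mem_singleton.1 hwb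
  exact (eq_or_adj_root hb).resolve_left hne.symm

theorem IsStar.exists_adj (h : t.IsStar) : ∃ v, ∀ w ∈ t.verts, w ≠ v → t.graph.Adj v w := by
  rcases h with h | ⟨b, hb, h⟩
  · exact ⟨t.root, fun w => h.adj_root⟩
  obtain ⟨x, l, rfl⟩ := t.exists_eq_node
  rw [kids_node] at hb
  subst hb
  refine ⟨b.root, fun w hw hne => ?_⟩
  simp only [mem_verts_node, List.mem_singleton, exists_eq_left] at hw
  rcases hw with rfl | hw
  · exact ((eq_or_adj_root (List.mem_singleton_self b)).resolve_left hne).symm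
  · simp only [node, graph]
    exact .inr (.inl (h.adj_root hw hne))

theorem IsBad.exists_iso (h : t.IsBad) (hn : t.verts.Nodup) (hall : ∀ v, v ∈ t.verts) :
    ∃ φ : t.graph ≃g pathGraph 5, φ t.root = 2 := by
  obtain ⟨e, he⟩ := t.exists_isLabelling
  have hshape := shape_eq_node.2 h
  have hsize : t.size = 5 := by rw [← size_shape, hshape]; rfl
  have hparents : t.parents 0 0 = [0, 0, 1, 0, 3] := by rw [← parents_shape, hshape]; rfl
  let p : Fin 5 → ℕ := ![2, 1, 0, 3, 4]
  have hp : ∀ i, p i < t.size := by rw [hsize]; decide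
  have hpinj : p.Injective := by decide
  have hpsurj : ∀ k < 5, ∃ i, p i = k := by decide
  have hinj : (e ∘ p).Injective := fun i j hij => hpinj ((he.eq_iff hn (hp i) (hp j)).1 hij)
  have hsurj : (e ∘ p).Surjective := fun v => by
    have hv : v ∈ {v | v ∈ (List.range t.size).map e} := he.vertexSet_eq ▸ hall v
    obtain ⟨k, hk, rfl⟩ := List.mem_map.1 hv
    obtain ⟨i, rfl⟩ := hpsurj k (hsize ▸ List.mem_range.1 hk)
    exact ⟨i, rfl⟩
  have hadj : ∀ {i j}, t.graph.Adj (e (p i)) (e (p j)) ↔ (pathGraph 5).Adj i j := fun {i j} => by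
    rw [he.adj_iff hn (hp i) (hp j), hparents, pathGraph_adj]
    revert i j
    decide
  let ψ : pathGraph 5 ≃g t.graph := ⟨.ofBijective (e ∘ p) ⟨hinj, hsurj⟩, hadj⟩
  exact ⟨ψ.symm, ψ.symm_apply_eq.2 he.root_eq⟩

end Link

end LTree

theorem stmt14_general {V : Type*} [Finite V] (G : SimpleGraph V) (hG : IsNonStarTree G) (x : V)
    (hx : ∀ φ : G ≃g pathGraph 5, φ x ≠ 2) :
    ∃ σ : Equiv.Perm V,
      (∀ v, σ v ≠ v) ∧
      (∀ u v, G.Adj u v → ¬ G.Adj (σ u) (σ v)) ∧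
      (∀ u v, G.Adj u v → G.dist (σ u) (σ v) ≤ 5) ∧
      G.dist x (σ x) = 1 ∧
      (∀ y, G.Adj x y → G.dist y (σ y) ≤ 2) ∧
      (∀ y, G.dist y (σ y) ≤ 4) := by
  obtain ⟨t, rfl, hn, hall, rfl⟩ := LTree.exists_graph_eq hG.1 x
  have hstar : ¬ t.IsStar := fun h => hG.2 (h.exists_adj.imp fun v hv w => hv w (hall w))
  have hbad : ¬ t.IsBad := fun h => (h.exists_iso hn hall).elim hx
  obtain ⟨f, hf⟩ := LTree.IsOk.good ⟨hstar, hbad⟩ hn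
  have hinj : f.Injective := fun u v => hf.injOn (hall u) (hall v)
  have hdist : ∀ {u v} {k : ℕ}, t.graph.edist u v ≤ k → t.graph.dist u v ≤ k := fun h =>
    ENat.toNat_le_of_le_natCast h
  exact ⟨.ofBijective f (Finite.injective_iff_bijective.1 hinj), fun v => hf.ne v (hall v),
    fun u v huv => (hf.edge u (hall u) v (hall v) huv).1,
    fun u v huv => hdist (hf.edge u (hall u) v (hall v) huv).2, dist_eq_one_iff_adj.2 hf.adj,
    fun y hy => hdist (hf.nbr y (hall y) hy), fun y => hdist (hf.edist_le y (hall y))⟩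

/-- every non-star tree T and vertex x which is not a bad vertex
(i.e. no isomorphism T ≅ P5 sends x to the middle vertex) admit a (T,x)-good
2-placement. -/
theorem stmt14 {V : Type*} [Fintype V] (G : SimpleGraph V)
    (hG : IsNonStarTree G) (x : V)
    (hx : ∀ φ : G ≃g pathGraph 5, φ x ≠ 2) :
    ∃ σ : Equiv.Perm V,
      (∀ v, σ v ≠ v) ∧
      (∀ u v, G.Adj u v → ¬ G.Adj (σ u) (σ v)) ∧
      (∀ u v, G.Adj u v → G.dist (σ u) (σ v) ≤ 5) ∧
      G.dist x (σ x) = 1 ∧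
      (∀ y, G.Adj x y → G.dist y (σ y) ≤ 2) ∧
      (∀ y, (∃! w, G.Adj y w) → G.dist y (σ y) ≤ 4) := by
  obtain ⟨σ, hne, hadj, hedge, hxdist, hnbr, hdist⟩ := stmt14_general G hG x hx
  exact ⟨σ, hne, hadj, hedge, hxdist, hnbr, fun y _ => hdist y⟩
end

section
/- Let T be a tree with a vertex x of degree 1 whose unique neighbor y has degree at least 3, and suppose every connected component of T − y not containing x is a path of length at most 2 attached to y at an end vertex (a 'neighbor F-tree' of y) and is not a single vertex. Then there exists a fixed-point-free permutation σ of V(T) that is a 2-placement of T, maps every edge to a pair at distance at most 6, satisfies dist(x,σ(x)) ≤ 2, dist(z,σ(z)) ≤ 3 for every neighbor z of x, dist(z,σ(z)) ≤ 4 for every leaf z, and has all cycles of length at most 5. -/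
open SimpleGraph

/-- The branch of the tree `G` at the edge `y z`: the set of vertices of the
connected component of `G - yz` containing `z`. -/
def branch {V : Type*} (G : SimpleGraph V) (y z : V) : Set V :=
  {v | (G.deleteEdges {s(y, z)}).Reachable z v}

/-- The branch at `z` is a neighbor F-tree of `y` which is not a single vertex:
it is a path of length 1, or a path of length 2 with `z` an end vertex. -/
def IsNeighborFTreeNotP1 {V : Type*} (G : SimpleGraph V) (y z : V) : Prop :=
  Nonempty ((G.induce (branch G y z)) ≃g pathGraph 2) ∨
    ∃ φ : (G.induce (branch G y z)) ≃g pathGraph 3,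
      φ ⟨z, Reachable.refl z⟩ = 0 ∨ φ ⟨z, Reachable.refl z⟩ = 2

/-!
All branches at `y` other than `{x}` are paths with two or three vertices, attached at an end
vertex, so `G` is a spider: a center `y` with a pendant leaf `x` and with legs of length two or
three. Pair the legs by an involution having at most one fixed leg, and distinguish one leg `i₀`,
the fixed one if there is any. Then `x`, `y` and the far part of `i₀` lie on one cycle, while the
other legs are run through in pairs, each in the order inner, tip, middle. This would give a 6-cycle
for a pair of long legs, which is given two 3-cycles instead. No vertex of a spider is further than
3 from the center, so two vertices are never further apart than 6, and the other distances are
bounded by adding up depths.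
-/

open Function

section Cycles

variable {α β : Type*} {f : α → α} {n : ℕ} {a : α}

/-- `a` lies on a cycle of `f` of length at most `n`. -/
def OnCycleLE (f : α → α) (n : ℕ) (a : α) : Prop :=
  ∃ k ∈ Finset.Icc 1 n, IsPeriodicPt f k a

theorem OnCycleLE.of_iterate_eq (ha : OnCycleLE f n a) (m : ℕ) {b : α} (hb : f^[m] a = b) :
    OnCycleLE f n b :=
  let ⟨k, hk, hka⟩ := ha
  ⟨k, hk, hb ▸ hka.apply_iterate m⟩

theorem OnCycleLE.map (ha : OnCycleLE f n a) {g : α → β} {f' : β → β} (hg : Semiconj g f f') :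
    OnCycleLE f' n (g a) :=
  let ⟨k, hk, hka⟩ := ha
  ⟨k, hk, hka.map hg⟩

theorem OnCycleLE.mem_periodicPts (ha : OnCycleLE f n a) : a ∈ periodicPts f :=
  let ⟨k, hk, hka⟩ := ha
  ⟨k, (Finset.mem_Icc.1 hk).1, hka⟩

theorem OnCycleLE.card_support_cycleOf_le [Fintype α] [DecidableEq α] {σ : Equiv.Perm α}
    (ha : OnCycleLE σ n a) : (σ.cycleOf a).support.card ≤ n := by
  obtain ⟨k, hk, hka⟩ := ha
  obtain ⟨hk, hkn⟩ := Finset.mem_Icc.1 hk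
  by_cases hfix : σ a = a
  · simp [σ.cycleOf_eq_one_iff.2 hfix]
  have hcycle := σ.isCycle_cycleOf hfix
  rw [← hcycle.orderOf]
  refine (orderOf_le_of_pow_eq_one hk (hcycle.pow_eq_one_iff.2 ⟨a, ?_, ?_⟩)).trans hkn
  · rwa [σ.cycleOf_apply_self]
  · rw [σ.cycleOf_pow_apply_self, ← Equiv.Perm.iterate_eq_pow]
    exact hka

theorem bijective_of_periodicPts_eq_univ (hf : periodicPts f = Set.univ) : Bijective f := by
  have := bijOn_periodicPts f
  rwa [hf, Set.bijOn_univ] at this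

theorem exists_involutive_fixedPoints_subsingleton (ι : Type*) :
    ∃ t : ι → ι, Involutive t ∧ (fixedPoints t).Subsingleton := by
  suffices h : ∃ (κ : Type _) (t : κ → κ),
      Nonempty (ι ≃ κ) ∧ Involutive t ∧ (fixedPoints t).Subsingleton by
    obtain ⟨κ, t, ⟨e⟩, ht, hfix⟩ := h
    have hmem {i : ι} (hi : i ∈ fixedPoints (e.symm ∘ t ∘ e)) : e i ∈ fixedPoints t := by
      simpa [IsFixedPt, Equiv.symm_apply_eq] using hi
    exact ⟨e.symm ∘ t ∘ e, fun i => by simp [ht (e i)],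
      fun i hi j hj => e.injective (hfix (hmem hi) (hmem hj))⟩
  rcases finite_or_infinite ι with hι | hι
  · refine ⟨ULift (Fin (Nat.card ι)), ULift.map Fin.rev,
      ⟨(Finite.equivFin ι).trans Equiv.ulift.symm⟩, fun ⟨i⟩ => by simp, ?_⟩
    rintro ⟨i⟩ hi ⟨j⟩ hj
    simp only [mem_fixedPoints, IsFixedPt, ULift.map, ULift.up_inj, Fin.ext_iff,
      Fin.val_rev] at hi hj ⊢
    omega
  · refine ⟨ι ⊕ ι, Sum.swap, Cardinal.eq.1 (by simp), Sum.swap_swap, ?_⟩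
    rintro (i | i) hi
    · exact absurd hi Sum.inr_ne_inl
    · exact absurd hi Sum.inl_ne_inr

end Cycles

section Homomorphisms

variable {V W : Type*} {G : SimpleGraph V} {H : SimpleGraph W}

theorem dist_map_le (f : H →g G) {u v : W} (huv : H.Reachable u v) :
    G.dist (f u) (f v) ≤ H.dist u v := by
  obtain ⟨p, hp⟩ := huv.exists_walk_length_eq_dist
  simpa only [Walk.length_map, hp] using dist_le (p.map f)

-- A tree is a minimal connected graph, so the pullback of `G` along `f` cannot be larger than `H`.
theorem exists_iso_of_bijective (hH : H.Connected) (hG : G.IsAcyclic) (f : H →g G)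
    (hf : Bijective f) : ∃ e : H ≃g G, ⇑e = f := by
  have hle : H ≤ G.comap f := fun _ _ => f.map_adj
  have htree : (G.comap f).IsTree := ⟨hH.mono hle, hG.comap (Hom.comap f G) hf.injective⟩
  have hge := (isTree_iff_minimal_connected.1 htree).le_of_le hH hle
  exact ⟨⟨Equiv.ofBijective f hf, fun {_ _} => ⟨fun h => hge h, f.map_adj⟩⟩, rfl⟩

theorem exists_embedding_of_induce_iso {s : Set V} (φ : G.induce s ≃g H) :
    ∃ g : H ↪g G, Set.range g = s ∧ ∀ v, g (φ v) = v :=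
  ⟨(SimpleGraph.Embedding.induce s).comp φ.symm.toEmbedding,
    by simpa [Set.range_comp] using Set.ext fun v => by simp, fun v => by simp⟩

end Homomorphisms

section Branches

variable {V : Type*} {G : SimpleGraph V} {x y z z' v : V}

theorem mem_branch_self : z ∈ branch G y z :=
  Reachable.refl z

theorem notMem_branch (hG : G.IsAcyclic) (hz : G.Adj y z) : y ∉ branch G y z := fun hy =>
  isBridge_iff.1 (isAcyclic_iff_forall_adj_isBridge.1 hG hz) (Reachable.symm hy)

theorem exists_isPath_of_mem_branch (hG : G.IsAcyclic) (hz : G.Adj y z) (hv : v ∈ branch G y z) :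
    ∃ p : G.Walk z v, p.IsPath ∧ y ∉ p.support := by
  obtain ⟨p, hp⟩ := Reachable.exists_isPath hv
  refine ⟨p.mapLe (deleteEdges_le _), hp.mapLe _, fun hy => notMem_branch hG hz ?_⟩
  classical
  rw [Walk.support_mapLe_eq_support] at hy
  exact (p.takeUntil y hy).reachable

theorem eq_of_mem_branch (hG : G.IsAcyclic) (hz : G.Adj y z) (hz' : G.Adj y z')
    (hv : v ∈ branch G y z) (hv' : v ∈ branch G y z') : z = z' := by
  obtain ⟨p, hp, hyp⟩ := exists_isPath_of_mem_branch hG hz hv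
  obtain ⟨q, hq, hyq⟩ := exists_isPath_of_mem_branch hG hz' hv'
  have hpq := (hG.subsingleton_path y v).elim ⟨.cons hz p, hp.cons hyp⟩ ⟨.cons hz' q, hq.cons hyq⟩
  simpa using congrArg (fun r : G.Path y v => r.1.snd) hpq

theorem exists_adj_mem_branch (hG : G.Preconnected) (hv : v ≠ y) :
    ∃ z, G.Adj y z ∧ v ∈ branch G y z := by
  obtain ⟨p, hp⟩ := hG.exists_isPath y v
  cases p with
  | nil => exact absurd rfl hv
  | @cons _ z _ hz p =>
    have hy : y ∉ p.support := ((Walk.cons_isPath_iff hz p).1 hp).2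
    exact ⟨z, hz, (p.toDeleteEdge s(y, z) fun h => hy (p.fst_mem_support_of_mem_edges h)).reachable⟩

theorem branch_eq_singleton (hx : ∀ w, G.Adj x w → w = y) : branch G y x = {x} := by
  refine Set.Subset.antisymm (fun v hv => ?_) (Set.singleton_subset_iff.2 mem_branch_self)
  obtain ⟨p⟩ : (G.deleteEdges {s(y, x)}).Reachable x v := hv
  cases p with
  | nil => rfl
  | cons h p =>
    rw [deleteEdges_adj] at h
    exact absurd (by rw [hx _ h.1, Sym2.eq_swap, Set.mem_singleton_iff]) h.2

-- `c = b` is the case of a path of length 1.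
theorem IsNeighborFTreeNotP1.exists_branch_eq (h : IsNeighborFTreeNotP1 G y z) :
    ∃ b c, G.Adj z b ∧ (c ≠ b → G.Adj b c ∧ c ≠ z) ∧ branch G y z = {z, b, c} := by
  rcases h with ⟨⟨φ⟩⟩ | ⟨φ, h⟩
  · obtain ⟨g, hrange, hg⟩ := exists_embedding_of_induce_iso φ
    have hz := hg ⟨z, mem_branch_self⟩
    generalize φ ⟨z, mem_branch_self⟩ = i at hz
    subst hz
    refine ⟨g i.rev, g i.rev, ?_, by simp, ?_⟩
    · rw [g.map_adj_iff, pathGraph_adj]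
      fin_cases i <;> decide
    · rw [← hrange]
      ext v
      fin_cases i <;> simp [Fin.exists_fin_two, eq_comm, or_comm]
  · obtain ⟨g, hrange, hg⟩ := exists_embedding_of_induce_iso φ
    have hz := hg ⟨z, mem_branch_self⟩
    generalize φ ⟨z, mem_branch_self⟩ = i at hz h
    subst hz
    refine ⟨g 1, g i.rev, ?_, fun _ => ⟨?_, ?_⟩, ?_⟩
    · rw [g.map_adj_iff, pathGraph_adj]
      rcases h with rfl | rfl <;> decide
    · rw [g.map_adj_iff, pathGraph_adj]
      rcases h with rfl | rfl <;> decide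
    · rw [g.injective.ne_iff]
      rcases h with rfl | rfl <;> decide
    · rw [← hrange]
      ext v
      have hv : v ∈ Set.range g ↔ v = g 0 ∨ v = g 1 ∨ v = g 2 := by
        simp [Fin.exists_fin_succ, eq_comm]
      have : (0 : Fin 3).rev = 2 ∧ (2 : Fin 3).rev = 0 := by decide
      rcases h with rfl | rfl <;> grind

end Branches

/-- A strengthening of the notion of `(G, x)`-well 2-placement: all vertices, and not only the
leaves, are required to move by a distance of at most 4. -/
structure IsWellPlacement {V : Type*} (G : SimpleGraph V) (x : V) (σ : Equiv.Perm V) : Prop where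
  apply_ne (v : V) : σ v ≠ v
  not_adj {u v : V} : G.Adj u v → ¬ G.Adj (σ u) (σ v)
  dist_apply_apply_le {u v : V} : G.Adj u v → G.dist (σ u) (σ v) ≤ 6
  dist_root_le : G.dist x (σ x) ≤ 2
  dist_neighbor_le {z : V} : G.Adj x z → G.dist z (σ z) ≤ 3
  dist_le (v : V) : G.dist v (σ v) ≤ 4
  onCycleLE (v : V) : OnCycleLE σ 5 v

theorem IsWellPlacement.map {V W : Type*} {G : SimpleGraph V} {H : SimpleGraph W} {w : W}
    {σ : Equiv.Perm W} (h : IsWellPlacement H w σ) (hH : H.Preconnected) (e : H ≃g G) :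
    IsWellPlacement G (e w) (e.toEquiv.permCongr σ) := by
  have dist_le_of_le {u v : W} {n : ℕ} (huv : H.dist u v ≤ n) : G.dist (e u) (e v) ≤ n :=
    (dist_map_le e.toHom (hH u v)).trans huv
  have permCongr_apply (v : W) : e.toEquiv.permCongr σ (e v) = e (σ v) :=
    congrArg (fun w => e (σ w)) (e.symm_apply_apply v)
  refine ⟨?_, fun {u v} huv => ?_, fun {u v} huv => ?_, ?_, fun {z} hz => ?_, ?_, ?_⟩
  · exact e.surjective.forall.2 fun v => by simpa [permCongr_apply] using h.apply_ne v
  · obtain ⟨⟨u, rfl⟩, v, rfl⟩ := And.intro (e.surjective u) (e.surjective v)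
    simpa only [permCongr_apply, e.map_adj_iff] using h.not_adj (e.map_adj_iff.1 huv)
  · obtain ⟨⟨u, rfl⟩, v, rfl⟩ := And.intro (e.surjective u) (e.surjective v)
    simpa only [permCongr_apply] using dist_le_of_le (h.dist_apply_apply_le (e.map_adj_iff.1 huv))
  · simpa only [permCongr_apply] using dist_le_of_le h.dist_root_le
  · obtain ⟨z, rfl⟩ := e.surjective z
    simpa only [permCongr_apply] using dist_le_of_le (h.dist_neighbor_le (e.map_adj_iff.1 hz))
  · exact e.surjective.forall.2 fun v => by
      simpa only [permCongr_apply] using dist_le_of_le (h.dist_le v)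
  · exact e.surjective.forall.2 fun v => (h.onCycleLE v).map fun a => (permCongr_apply a).symm

/-- The vertices of the model tree: a center with a pendant leaf and, for every `i : ι`, a leg
`inner i`, `middle i`, which is continued by `outer i` when `Long i` holds. -/
inductive Spider {ι : Type*} (Long : ι → Prop)
  | leaf
  | center
  | inner (i : ι)
  | middle (i : ι)
  | outer (i : ι) (h : Long i)

namespace Spider

variable {ι : Type*} {Long : ι → Prop}

section Graph

/-- The next vertex on the way to the center, with the convention that the center is its own
parent. -/
def parent : Spider Long → Spider Long
  | leaf => center
  | center => center
  | inner _ => center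
  | middle i => inner i
  | outer i _ => middle i

/-- The distance to the center. -/
def depth : Spider Long → ℕ
  | leaf => 1
  | center => 0
  | inner _ => 1
  | middle _ => 2
  | outer _ _ => 3

variable (Long) in
/-- The tree on `Spider Long` whose edges join the vertices to their parents. -/
def graph : SimpleGraph (Spider Long) :=
  SimpleGraph.fromRel fun u v => u.parent = v

theorem graph_adj {u v : Spider Long} :
    (graph Long).Adj u v ↔ u ≠ v ∧ (u.parent = v ∨ v.parent = u) :=
  SimpleGraph.fromRel_adj _ u v

theorem adj_parent {v : Spider Long} (hv : v.parent ≠ v) : (graph Long).Adj v v.parent :=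
  graph_adj.2 ⟨hv.symm, .inl rfl⟩

theorem dist_parent_le (v : Spider Long) : (graph Long).dist v v.parent ≤ 1 := by
  by_cases hv : v.parent = v
  · simp [hv]
  · exact (dist_eq_one_iff_adj.2 (adj_parent hv)).le

theorem depth_le (v : Spider Long) : v.depth ≤ 3 := by
  cases v <;> simp [depth]

theorem exists_walk_length_eq_depth (v : Spider Long) :
    ∃ p : (graph Long).Walk v center, p.length = v.depth := by
  have step {u : Spider Long} (hu : u.parent ≠ u) (hd : u.depth = u.parent.depth + 1) :
      (∃ p : (graph Long).Walk u.parent center, p.length = u.parent.depth) →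
      ∃ p : (graph Long).Walk u center, p.length = u.depth := by
    rintro ⟨p, hp⟩
    exact ⟨.cons (adj_parent hu) p, by simp [hp, hd]⟩
  have hcenter : ∃ p : (graph Long).Walk center center, p.length = depth (center : Spider Long) :=
    ⟨.nil, rfl⟩
  have hinner (i : ι) := step (u := inner i) nofun rfl hcenter
  have hmiddle (i : ι) := step (u := middle i) nofun rfl (hinner i)
  cases v with
  | leaf => exact step nofun rfl hcenter
  | center => exact hcenter
  | inner i => exact hinner i
  | middle i => exact hmiddle i
  | outer i h => exact step nofun rfl (hmiddle i)

theorem graph_connected : (graph Long).Connected :=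
  connected_iff_exists_forall_reachable _ |>.2
    ⟨center, fun v => (exists_walk_length_eq_depth v).choose.reachable.symm⟩

theorem dist_le_depth_add_depth (u v : Spider Long) :
    (graph Long).dist u v ≤ u.depth + v.depth := by
  obtain ⟨p, hp⟩ := exists_walk_length_eq_depth u
  obtain ⟨q, hq⟩ := exists_walk_length_eq_depth v
  simpa [hp, hq] using SimpleGraph.dist_le (p.append q.reverse)

end Graph

section Placement

open Classical in
/-- The last vertex of the leg `i`. -/
noncomputable def tip (i : ι) : Spider Long :=
  if h : Long i then outer i h else middle i

variable (Long) in
/-- The leg `i` and its partner `t i` under the pairing `t` are both long, and neither is the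
distinguished leg `i₀`. -/
def IsTwin (t : ι → ι) (i₀ i : ι) : Prop :=
  i ≠ i₀ ∧ t i ≠ i₀ ∧ Long i ∧ Long (t i)

open Classical in
/-- The placement of the spider defined by an involution `t` of the legs with at most the fixed
point `i₀`. Its cycles are
* `leaf → center → middle i₀ → outer i₀ → inner i₀`, where `outer i₀` is left out if `i₀` is short
  and `inner i₀` is left out if `t i₀ ≠ i₀`;
* for the pair `{i₀, j}` with `j = t i₀ ≠ i₀`: `inner i₀ → inner j → tip j`, returning through
  `middle j` if `j` is long;
* for a pair `{i, j}` of twins: `inner i → middle j → outer j` and `inner j → middle i → outer i`;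
* for every other pair `{i, j}`: the leg `i` in the order inner, tip, middle, followed by the leg
  `j` in the same order. -/
noncomputable def placement (t : ι → ι) (i₀ : ι) : Spider Long → Spider Long
  | leaf => center
  | center => middle i₀
  | inner i =>
    if i = i₀ then if t i = i then leaf else inner (t i)
    else if IsTwin Long t i₀ i then middle (t i) else tip i
  | middle i =>
    if h : Long i ∧ (i = i₀ ∨ IsTwin Long t i₀ i) then outer i h.1
    else if i = i₀ then if t i = i then inner i else leaf
    else inner (t i)
  | outer i _ =>
    if i = i₀ then if t i = i then inner i else leaf
    else if IsTwin Long t i₀ i then inner (t i) else middle i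

variable {t : ι → ι} {i₀ i : ι}

theorem placement_ne (ht : Involutive t) (hfix : ∀ i, t i = i → i = i₀) (v : Spider Long) :
    placement t i₀ v ≠ v := by
  cases v with
  | leaf | center => simp [placement]
  | inner i | middle i | outer i h =>
  simp only [placement, tip]
  split_ifs <;> grind [ht i, hfix i]

theorem placement_not_adj_parent (ht : Involutive t) (hfix : ∀ i, t i = i → i = i₀)
    (v : Spider Long) : ¬ (graph Long).Adj (placement t i₀ v) (placement t i₀ v.parent) := by
  cases v with
  | leaf | center => simp [placement, graph_adj, parent]
  | inner i | middle i | outer i h =>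
  simp only [placement, tip, graph_adj, parent, IsTwin]
  split_ifs <;> grind [parent, ht i, hfix i]

theorem parent_placement_eq_or_eq_parent_or_depth_add_depth_le (v : Spider Long) :
    (placement t i₀ v).parent = v ∨ placement t i₀ v = v.parent ∨
      v.depth + (placement t i₀ v).depth ≤ 4 := by
  cases v with
  | leaf | center => simp [placement, depth]
  | inner i | middle i | outer i h =>
  simp only [placement, tip]
  split_ifs <;> simp [depth, parent]

theorem dist_placement_le (v : Spider Long) : (graph Long).dist v (placement t i₀ v) ≤ 4 := by
  rcases parent_placement_eq_or_eq_parent_or_depth_add_depth_le (t := t) (i₀ := i₀) v with h | h | h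
  · have := dist_parent_le (placement t i₀ v)
    rw [h, dist_comm] at this
    exact this.trans (by norm_num)
  · exact (h ▸ dist_parent_le v).trans (by norm_num)
  · exact (dist_le_depth_add_depth _ _).trans h

open Classical in
variable (Long) in
/-- The number of vertices of the leg `i`. -/
noncomputable def legLength (i : ι) : ℕ :=
  if Long i then 3 else 2

theorem IsTwin.symm (ht : Involutive t) (hi : IsTwin Long t i₀ i) : IsTwin Long t i₀ (t i) :=
  ⟨hi.2.1, (ht i).symm ▸ hi.1, hi.2.2.2, (ht i).symm ▸ hi.2.2.1⟩

theorem IsTwin.placement_inner (hi : IsTwin Long t i₀ i) :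
    placement t i₀ (inner i : Spider Long) = middle (t i) := by
  simp [placement, hi, hi.1]

theorem IsTwin.placement_middle (hi : IsTwin Long t i₀ i) :
    placement t i₀ (middle i : Spider Long) = outer i hi.2.2.1 := by
  simp [placement, hi, hi.2.2.1]

theorem IsTwin.placement_outer (hi : IsTwin Long t i₀ i) (h : Long i) :
    placement t i₀ (outer i h) = inner (t i) := by
  simp [placement, hi, hi.1]

theorem placement_iterate_legLength (hi : i ≠ i₀) (htwin : ¬ IsTwin Long t i₀ i) :
    (placement t i₀)^[legLength Long i] (inner i : Spider Long) = inner (t i) := by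
  by_cases h : Long i <;> simp [legLength, placement, tip, hi, htwin, h]

theorem onCycleLE_leaf : OnCycleLE (placement t i₀) 5 (leaf : Spider Long) := by
  by_cases h : t i₀ = i₀
  · refine ⟨legLength Long i₀ + 2, ?_, ?_⟩ <;> by_cases hlong : Long i₀ <;>
      simp [IsPeriodicPt, IsFixedPt, placement, legLength, h, hlong]
  · refine ⟨legLength Long i₀ + 1, ?_, ?_⟩ <;> by_cases hlong : Long i₀ <;>
      simp [IsPeriodicPt, IsFixedPt, placement, legLength, h, hlong]

theorem onCycleLE_middle_root : OnCycleLE (placement t i₀) 5 (middle i₀ : Spider Long) :=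
  onCycleLE_leaf.of_iterate_eq 2 rfl

theorem onCycleLE_outer_root (h : Long i₀) : OnCycleLE (placement t i₀) 5 (outer i₀ h) :=
  onCycleLE_middle_root.of_iterate_eq 1 (by simp [placement, h])

theorem onCycleLE_inner_of_ne (ht : Involutive t) (hi : i ≠ i₀) :
    OnCycleLE (placement t i₀) 5 (inner i : Spider Long) := by
  by_cases htwin : IsTwin Long t i₀ i
  · have htwin' := htwin.symm ht
    refine ⟨3, by simp, ?_⟩
    simp [IsPeriodicPt, IsFixedPt, htwin.placement_inner, htwin'.placement_middle,
      htwin'.placement_outer, ht i]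
  have hleg := placement_iterate_legLength hi htwin
  by_cases hti : t i = i₀
  · refine ⟨1 + legLength Long i, ?_, ?_⟩
    · simp only [legLength]; split_ifs <;> simp
    · have : t i₀ = i := hti ▸ ht i
      simp [IsPeriodicPt, IsFixedPt, iterate_add_apply, hleg, placement, hti, this, hi]
  · have htwin' : ¬ IsTwin Long t i₀ (t i) := fun h => htwin (ht i ▸ h.symm ht)
    have hleg' := placement_iterate_legLength hti htwin'
    refine ⟨legLength Long (t i) + legLength Long i, ?_, ?_⟩
    · have : ¬ (Long i ∧ Long (t i)) := fun h => htwin ⟨hi, hti, h⟩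
      simp only [legLength, Finset.mem_Icc]
      grind
    · simp only [IsPeriodicPt, IsFixedPt, iterate_add_apply, hleg, hleg', ht i]

theorem onCycleLE_inner (ht : Involutive t) (i : ι) :
    OnCycleLE (placement t i₀) 5 (inner i : Spider Long) := by
  rcases ne_or_eq i i₀ with hi | rfl
  · exact onCycleLE_inner_of_ne ht hi
  by_cases hti : t i = i
  · by_cases h : Long i
    · exact (onCycleLE_outer_root h).of_iterate_eq 1 (by simp [placement, hti])
    · exact onCycleLE_middle_root.of_iterate_eq 1 (by simp [placement, hti, h])
  · refine (onCycleLE_inner_of_ne ht hti).of_iterate_eq (legLength Long (t i)) ?_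
    rw [placement_iterate_legLength hti fun h => h.2.1 (ht i), ht i]

theorem onCycleLE_outer (ht : Involutive t) (i : ι) (h : Long i) :
    OnCycleLE (placement t i₀) 5 (outer i h) := by
  rcases eq_or_ne i i₀ with rfl | hi
  · exact onCycleLE_outer_root h
  by_cases htwin : IsTwin Long t i₀ i
  · refine (onCycleLE_inner ht (t i)).of_iterate_eq 2 ?_
    simp [(htwin.symm ht).placement_inner, ht i, htwin.placement_middle]
  · exact (onCycleLE_inner ht i).of_iterate_eq 1 (by simp [placement, tip, hi, htwin, h])

theorem onCycleLE_middle (ht : Involutive t) (i : ι) :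
    OnCycleLE (placement t i₀) 5 (middle i : Spider Long) := by
  rcases eq_or_ne i i₀ with rfl | hi
  · exact onCycleLE_middle_root
  by_cases htwin : IsTwin Long t i₀ i
  · refine (onCycleLE_inner ht (t i)).of_iterate_eq 1 ?_
    simp [(htwin.symm ht).placement_inner, ht i]
  by_cases h : Long i
  · exact (onCycleLE_outer ht i h).of_iterate_eq 1 (by simp [placement, hi, htwin])
  · exact (onCycleLE_inner ht i).of_iterate_eq 1 (by simp [placement, tip, hi, htwin, h])

theorem onCycleLE_placement (ht : Involutive t) (v : Spider Long) :
    OnCycleLE (placement t i₀) 5 v := by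
  cases v with
  | leaf => exact onCycleLE_leaf
  | center => exact onCycleLE_leaf.of_iterate_eq 1 rfl
  | inner i => exact onCycleLE_inner ht i
  | middle i => exact onCycleLE_middle ht i
  | outer i h => exact onCycleLE_outer ht i h

theorem isWellPlacement_placement (ht : Involutive t) (hfix : ∀ i, t i = i → i = i₀)
    (hbij : Bijective (placement t i₀)) :
    IsWellPlacement (graph Long) leaf (Equiv.ofBijective (placement t i₀) hbij) where
  apply_ne := placement_ne ht hfix
  not_adj {u v} huv := by
    rcases (graph_adj.1 huv).2 with rfl | rfl
    · exact placement_not_adj_parent ht hfix u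
    · exact fun h => placement_not_adj_parent ht hfix v h.symm
  dist_apply_apply_le _ :=
    (dist_le_depth_add_depth _ _).trans (add_le_add (depth_le _) (depth_le _))
  dist_root_le := (dist_le_depth_add_depth _ _).trans (by simp [depth, placement])
  dist_neighbor_le {z} hz := by
    obtain rfl : z = center := by
      rcases (graph_adj.1 hz).2 with h | h
      · exact h.symm
      · cases z <;> simp_all [parent]
    exact (dist_le_depth_add_depth _ _).trans (by simp [depth, placement])
  dist_le := dist_placement_le
  onCycleLE := onCycleLE_placement ht

theorem exists_isWellPlacement [Nonempty ι] : ∃ σ, IsWellPlacement (graph Long) leaf σ := by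
  obtain ⟨t, i₀, ht, hfix⟩ : ∃ (t : ι → ι) (i₀ : ι), Involutive t ∧ ∀ i, t i = i → i = i₀ := by
    obtain ⟨t, ht, hfix⟩ := exists_involutive_fixedPoints_subsingleton ι
    rcases (fixedPoints t).eq_empty_or_nonempty with h | ⟨i₀, hi₀⟩
    · exact ⟨t, Classical.arbitrary ι, ht, fun i hi => absurd (h ▸ hi) (Set.notMem_empty i)⟩
    · exact ⟨t, i₀, ht, fun i hi => hfix hi hi₀⟩
  have hbij : Bijective (placement t i₀ : Spider Long → Spider Long) :=
    bijective_of_periodicPts_eq_univ <|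
      Set.eq_univ_of_forall fun v => (onCycleLE_placement ht v).mem_periodicPts
  exact ⟨_, isWellPlacement_placement ht hfix hbij⟩

end Placement

section Elim

variable {V : Type*} {x y : V} {a b c : ι → V}

/-- The map from the spider which sends the leaf to `x`, the center to `y`, and the vertices of
the leg `i` to `a i`, `b i` and `c i`. -/
def elim (x y : V) (a b c : ι → V) : Spider Long → V
  | leaf => x
  | center => y
  | inner i => a i
  | middle i => b i
  | outer i _ => c i

theorem elim_injective {S : ι → Set V} (hS : Pairwise (Disjoint on S)) (ha : ∀ i, a i ∈ S i)
    (hb : ∀ i, b i ∈ S i) (hc : ∀ i, Long i → c i ∈ S i) (hx : ∀ i, x ∉ S i) (hy : ∀ i, y ∉ S i)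
    (hxy : x ≠ y) (hab : ∀ i, a i ≠ b i) (hca : ∀ i, Long i → c i ≠ a i)
    (hcb : ∀ i, Long i → c i ≠ b i) : Injective (elim x y a b c : Spider Long → V) := by
  have eq_of_mem {i j : ι} {v : V} (hi : v ∈ S i) (hj : v ∈ S j) : i = j :=
    hS.eq fun h => Set.disjoint_left.1 h hi hj
  intro u v huv
  cases u <;> cases v <;> grind [elim]

theorem elim_adj {G : SimpleGraph V} (hxy : G.Adj x y) (ha : ∀ i, G.Adj y (a i))
    (hab : ∀ i, G.Adj (a i) (b i)) (hbc : ∀ i, Long i → G.Adj (b i) (c i)) {u v : Spider Long}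
    (huv : (graph Long).Adj u v) : G.Adj (elim x y a b c u) (elim x y a b c v) := by
  have adj_parent (w : Spider Long) (hw : w.parent ≠ w) :
      G.Adj (elim x y a b c w) (elim x y a b c w.parent) := by
    cases w with
    | leaf => exact hxy
    | center => exact absurd rfl hw
    | inner i => exact (ha i).symm
    | middle i => exact (hab i).symm
    | outer i h => exact (hbc i h).symm
  rcases graph_adj.1 huv with ⟨hne, rfl | rfl⟩
  · exact adj_parent u hne.symm
  · exact (adj_parent v hne).symm

end Elim

end Spider

section Main

variable {V : Type*} {G : SimpleGraph V} {x y : V}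

theorem exists_spider_iso (hG : G.IsTree) (hxy : G.Adj x y) (hx : ∀ w, G.Adj x w → w = y)
    (hF : ∀ z, G.Adj y z → z ≠ x → IsNeighborFTreeNotP1 G y z) :
    ∃ (Long : {z // G.Adj y z ∧ z ≠ x} → Prop) (e : Spider.graph Long ≃g G), e .leaf = x := by
  choose b c hzb hbc hbranch using fun z : {z // G.Adj y z ∧ z ≠ x} =>
    (hF z z.2.1 z.2.2).exists_branch_eq
  let f : Spider.graph (fun z => c z ≠ b z) →g G :=
    ⟨Spider.elim x y (↑) b c, Spider.elim_adj hxy (fun z => z.2.1) hzb fun z h => (hbc z h).1⟩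
  have hinj : Injective f := by
    refine Spider.elim_injective (S := fun z => branch G y z) ?_ (fun z => mem_branch_self)
      (fun z => by simp [hbranch]) (fun z _ => by simp [hbranch]) ?_
      (fun z => notMem_branch hG.isAcyclic z.2.1) hxy.ne (fun z => (hzb z).ne)
      (fun z h => (hbc z h).2) fun z h => h
    · exact fun z z' hne => Set.disjoint_left.2 fun v hv hv' =>
        hne (Subtype.ext (eq_of_mem_branch hG.isAcyclic z.2.1 z'.2.1 hv hv'))
    · exact fun z hz =>
        z.2.2 (eq_of_mem_branch hG.isAcyclic z.2.1 hxy.symm hz mem_branch_self)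
  have hsurj : Surjective f := by
    intro v
    rcases eq_or_ne v y with rfl | hv
    · exact ⟨.center, rfl⟩
    obtain ⟨z, hz, hvz⟩ := exists_adj_mem_branch hG.connected.preconnected hv
    rcases eq_or_ne z x with rfl | hzx
    · rw [branch_eq_singleton hx] at hvz
      exact ⟨.leaf, hvz.symm⟩
    rw [hbranch ⟨z, hz, hzx⟩] at hvz
    rcases hvz with rfl | rfl | rfl
    · exact ⟨.inner ⟨v, hz, hzx⟩, rfl⟩
    · exact ⟨.middle ⟨z, hz, hzx⟩, rfl⟩
    · by_cases h : c ⟨z, hz, hzx⟩ = b ⟨z, hz, hzx⟩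
      · exact ⟨.middle ⟨z, hz, hzx⟩, h.symm⟩
      · exact ⟨.outer ⟨z, hz, hzx⟩ h, rfl⟩
  obtain ⟨e, he⟩ := exists_iso_of_bijective Spider.graph_connected hG.isAcyclic f ⟨hinj, hsurj⟩
  exact ⟨_, e, congrFun he .leaf⟩

theorem stmt18_general (hG : G.IsTree) (hxy : G.Adj x y) (hx : ∃! w, G.Adj x w)
    (hy : (G.neighborSet y).Nontrivial)
    (hF : ∀ z, G.Adj y z → z ≠ x → IsNeighborFTreeNotP1 G y z) :
    ∃ σ : Equiv.Perm V, IsWellPlacement G x σ := by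
  obtain ⟨Long, e, he⟩ := exists_spider_iso hG hxy (fun w hw => hx.unique hw hxy) hF
  obtain ⟨z, hz, hzx⟩ := hy.exists_ne x
  have : Nonempty {z // G.Adj y z ∧ z ≠ x} := ⟨z, hz, hzx⟩
  obtain ⟨σ, hσ⟩ := Spider.exists_isWellPlacement (Long := Long)
  exact ⟨_, he ▸ hσ.map Spider.graph_connected.preconnected e⟩

theorem neighborSet_nontrivial_of_two_le_degree [Fintype (G.neighborSet y)] (hy : 2 ≤ G.degree y) :
    (G.neighborSet y).Nontrivial := by
  rwa [← Set.one_lt_ncard_iff_nontrivial, Set.ncard_eq_toFinset_card', Set.toFinset_card,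
    G.card_neighborSet_eq_degree]

end Main

/-- if x is a leaf of the tree T whose neighbor y has degree ≥ 3 and
every component of T − y not containing x is a neighbor F-tree of y that is not a
single vertex, then there is a (T,x)-well 2-placement. -/
theorem stmt18 {V : Type*} [Fintype V] [DecidableEq V] (G : SimpleGraph V)
    [DecidableRel G.Adj] (hG : G.IsTree) (x y : V) (hxy : G.Adj x y)
    (hx : ∃! w, G.Adj x w) (hy : 3 ≤ G.degree y)
    (hF : ∀ z, G.Adj y z → z ≠ x → IsNeighborFTreeNotP1 G y z) :
    ∃ σ : Equiv.Perm V,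
      (∀ v, σ v ≠ v) ∧
      (∀ u v, G.Adj u v → ¬ G.Adj (σ u) (σ v)) ∧
      (∀ u v, G.Adj u v → G.dist (σ u) (σ v) ≤ 6) ∧
      G.dist x (σ x) ≤ 2 ∧
      (∀ z, G.Adj x z → G.dist z (σ z) ≤ 3) ∧
      (∀ z, (∃! w, G.Adj z w) → G.dist z (σ z) ≤ 4) ∧
      (∀ v, (σ.cycleOf v).support.card ≤ 5) := by
  obtain ⟨σ, h⟩ := stmt18_general hG hxy hx
    (neighborSet_nontrivial_of_two_le_degree (Nat.le_of_succ_le hy)) hF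
  exact ⟨σ, h.apply_ne, fun _ _ => h.not_adj, fun _ _ => h.dist_apply_apply_le, h.dist_root_le,
    fun _ => h.dist_neighbor_le, fun z _ => h.dist_le z,
    fun v => (h.onCycleLE v).card_support_cycleOf_le⟩
end
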